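/- arXiv:2104.06302 — 2 statements merged into one kernel-verified Lean document; each statement's English description precedes it below -/
import Mathlib

section
/- Let ω>0, let b=(b₁,b₂)∈ℝ²×ℝ² be such that the pair (J₂(ω),b) is controllable, and let σ be a saturation function. Then there exists a vector K∈ℝ⁴ such that the closed-loop system ẋ = J₂(ω)x − b·σ(Kᵀx) is globally asymptotically stable with respect to the origin. -/
open Real Filter MeasureTheory intervalIntegral RealInnerProductSpace

noncomputable section

/-- A saturation function: odd, globally Lipschitz, sign-definite, with finite positive limits
of `σ` at `+∞` and of `σ ξ / ξ` at `0`, non-decreasing, differentiable on `(0,∞)` with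
non-increasing derivative there. -/
def IsSaturation (σ : ℝ → ℝ) : Prop :=
  (∀ ξ, σ (-ξ) = -σ ξ) ∧
  (∃ L : NNReal, LipschitzWith L σ) ∧
  (∀ ξ : ℝ, ξ ≠ 0 → σ ξ * ξ > 0) ∧
  (∃ l > 0, Tendsto σ atTop (nhds l)) ∧
  (∃ l > 0, Tendsto (fun ξ => σ ξ / ξ) (nhdsWithin 0 {(0:ℝ)}ᶜ) (nhds l)) ∧
  Monotone σ ∧
  DifferentiableOn ℝ σ (Set.Ioi 0) ∧
  AntitoneOn (deriv σ) (Set.Ioi 0)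

/-- `J₂(ω)`, the 4×4 matrix `[[ωA₀, I₂],[0₂, ωA₀]]` with `A₀ = [[0,-1],[1,0]]`. -/
def J2mat (ω : ℝ) : Matrix (Fin 4) (Fin 4) ℝ :=
  !![0, -ω, 1, 0; ω, 0, 0, 1; 0, 0, 0, -ω; 0, 0, ω, 0]

/-- `(A, b)` is controllable: `(b, Ab, A²b, A³b)` spans `ℝ⁴`. -/
def Controllable (A : Matrix (Fin 4) (Fin 4) ℝ) (b : Fin 4 → ℝ) : Prop :=
  Submodule.span ℝ {b, A.mulVec b, (A * A).mulVec b, (A * A * A).mulVec b} = ⊤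

/-- Global asymptotic stability with respect to the origin of the (possibly time-varying)
system `ẋ = F t x` on `ℝ⁴`: Lyapunov stability uniform in the initial time, plus global
attractivity. -/
def IsGAS (F : ℝ → (Fin 4 → ℝ) → (Fin 4 → ℝ)) : Prop :=
  (∀ δ > 0, ∃ η > 0, ∀ t₀ : ℝ, 0 ≤ t₀ → ∀ x : ℝ → Fin 4 → ℝ,
      (∀ t, t₀ ≤ t → HasDerivAt x (F t (x t)) t) → ‖x t₀‖ ≤ η →
      ∀ t, t₀ ≤ t → ‖x t‖ ≤ δ) ∧
  (∀ t₀ : ℝ, 0 ≤ t₀ → ∀ x : ℝ → Fin 4 → ℝ,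
      (∀ t, t₀ ≤ t → HasDerivAt x (F t (x t)) t) →
      Tendsto x atTop (nhds 0))

/-! In complex coordinates rotating with the oscillator the system is the double integrator
`ẇ₁ = w₂`, `ẇ₂ = -σ(y) e^{-iωt}`, and we use the low-gain output `y = Re (e^{iωt} (κ² w₁ + κ w₂))`.
Let `T` be the period and `S` the potential of `σ`. Along trajectories, the increment `S(y(t)) -
S(y(t - T))` contains the term `κ² T σ(y) Re (e^{iωt} w₂)`, which exactly cancels the derivative of
`κ²/2 |w₂|²` in the functional `κ²/2 |w₂|² + (1/T) ∫ S(y)` (integral over the preceding period).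
What remains, integrated over a period, is `-(κ/T) |d|²`, where `d` is the change of `w₂` over that
period, up to errors of order `κ² T² max |σ(y)|²`.

A single period may see almost no drift, but among 64 successive periods there is one on which the
amplitude of `y` is nearly a constant `r`, comparable to its largest value over all of them. On that
period `|d| ≥ σ(r) T / 16`, while all the errors are at most a multiple of `κ² T² σ(r)²`, because
`σ(c r) ≤ c σ(r)` for `c ≥ 1`. For small `κ` the functional therefore decreases over the delay
`64 T` by a positive non-decreasing function of `|w|`, which gives stability and attractivity. -/

open Set ComplexConjugate
open scoped NNReal Topology

/-! ### Integrals of monotone and Lipschitz functions -/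

section IntervalIntegral

variable {f g : ℝ → ℝ} {a b : ℝ}

theorem integral_le_integral_of_sub_mul_nonpos (hf : IntervalIntegrable f volume a b)
    (hg : IntervalIntegrable g volume a b) (h : ∀ y ∈ uIcc a b, (f y - g y) * (b - a) ≤ 0) :
    ∫ y in a..b, f y ≤ ∫ y in a..b, g y := by
  rcases lt_trichotomy a b with hab | rfl | hba
  · refine integral_mono_on hab.le hf hg fun y hy => ?_
    have := h y (Icc_subset_uIcc hy)
    nlinarith
  · simp only [integral_same, le_refl]
  · rw [integral_symm b a, integral_symm b a, neg_le_neg_iff]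
    refine integral_mono_on hba.le hg.symm hf.symm fun y hy => ?_
    have := h y (Icc_subset_uIcc' hy)
    nlinarith

theorem integral_le_of_monotone (hmono : Monotone f) : ∫ y in a..b, f y ≤ f b * (b - a) := by
  calc ∫ y in a..b, f y ≤ ∫ _ in a..b, f b :=
        integral_le_integral_of_sub_mul_nonpos hmono.intervalIntegrable (by simp) fun y hy => by
          rcases mem_uIcc.1 hy with ⟨h₁, h₂⟩ | ⟨h₁, h₂⟩
          · exact mul_nonpos_of_nonpos_of_nonneg (sub_nonpos.2 (hmono h₂)) (by linarith)
          · exact mul_nonpos_of_nonneg_of_nonpos (sub_nonneg.2 (hmono h₁)) (by linarith)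
    _ = f b * (b - a) := by rw [intervalIntegral.integral_const, smul_eq_mul, mul_comm]

theorem integral_le_of_lipschitzWith {L : ℝ≥0} (hf : LipschitzWith L f) :
    ∫ y in a..b, f y ≤ f a * (b - a) + L / 2 * (b - a) ^ 2 := by
  calc ∫ y in a..b, f y ≤ ∫ y in a..b, (f a + L * (y - a)) :=
        integral_le_integral_of_sub_mul_nonpos (hf.continuous.intervalIntegrable _ _)
          (Continuous.intervalIntegrable (by fun_prop) _ _) fun y hy => by
          have hlip : |f y - f a| ≤ L * |y - a| := hf.dist_le_mul y a
          rcases mem_uIcc.1 hy with ⟨h₁, h₂⟩ | ⟨h₁, h₂⟩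
          · rw [abs_of_nonneg (sub_nonneg.2 h₁)] at hlip
            nlinarith [le_abs_self (f y - f a)]
          · rw [abs_of_nonpos (sub_nonpos.2 h₂)] at hlip
            nlinarith [neg_abs_le (f y - f a)]
    _ = f a * (b - a) + L / 2 * (b - a) ^ 2 := by
        rw [intervalIntegral.integral_add (by simp)
          (Continuous.intervalIntegrable (by fun_prop) _ _),
          intervalIntegral.integral_const, intervalIntegral.integral_const_mul,
          intervalIntegral.integral_comp_sub_right (fun y => y), integral_id, smul_eq_mul]
        ring

theorem integral_le_of_monotone_of_lipschitzWith {L : ℝ≥0} (hL : 0 < L) (hmono : Monotone f)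
    (hf : LipschitzWith L f) :
    ∫ y in a..b, f y ≤ f b * (b - a) - (f b - f a) ^ 2 / (2 * L) := by
  have : (0 : ℝ) < L := hL
  -- At `c` the Lipschitz bound `f a + L * (y - a)` reaches `f b`.
  set c := a + (f b - f a) / L with hc
  have hcont := hf.continuous
  calc ∫ y in a..b, f y = (∫ y in a..c, f y) + ∫ y in c..b, f y :=
        (integral_add_adjacent_intervals (hcont.intervalIntegrable _ _)
          (hcont.intervalIntegrable _ _)).symm
    _ ≤ (f a * (c - a) + L / 2 * (c - a) ^ 2) + f b * (b - c) :=
        add_le_add (integral_le_of_lipschitzWith hf) (integral_le_of_monotone hmono)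
    _ = f b * (b - a) - (f b - f a) ^ 2 / (2 * L) := by
        rw [hc]
        field_simp
        ring

theorem integral_const_sub_mul_sub_mul (hf : Continuous f) (hg : Continuous g) (c k m : ℝ) :
    ∫ s in a..b, (c - k * f s - m * g s) =
      c * (b - a) - k * (∫ s in a..b, f s) - m * ∫ s in a..b, g s := by
  rw [intervalIntegral.integral_sub, intervalIntegral.integral_sub,
    intervalIntegral.integral_const, intervalIntegral.integral_const_mul,
    intervalIntegral.integral_const_mul, smul_eq_mul, mul_comm (b - a)]
  all_goals exact Continuous.intervalIntegrable (by fun_prop) _ _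

theorem mul_integral_abs_sub_integral_sq_le (hf : Continuous f) (hab : a ≤ b) (c : ℝ) {k : ℝ}
    (hk : 0 < k) :
    c * (∫ s in a..b, |f s|) - 1 / (2 * k) * ∫ s in a..b, f s ^ 2 ≤ k * c ^ 2 / 2 * (b - a) := by
  calc c * (∫ s in a..b, |f s|) - 1 / (2 * k) * ∫ s in a..b, f s ^ 2
      = ∫ s in a..b, (c * |f s| - 1 / (2 * k) * f s ^ 2) := by
        rw [intervalIntegral.integral_sub (Continuous.intervalIntegrable (by fun_prop) _ _)
          (Continuous.intervalIntegrable (by fun_prop) _ _),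
          intervalIntegral.integral_const_mul, intervalIntegral.integral_const_mul]
    _ ≤ ∫ _ in a..b, k * c ^ 2 / 2 := by
        refine integral_mono_on hab (Continuous.intervalIntegrable (by fun_prop) _ _)
          (by simp) fun s _ => ?_
        have hsq : 0 ≤ (|f s| - k * c) ^ 2 / (2 * k) := by positivity
        have : k * c ^ 2 / 2 - (c * |f s| - 1 / (2 * k) * f s ^ 2)
            = (|f s| - k * c) ^ 2 / (2 * k) := by
          rw [← sq_abs (f s)]
          field_simp
          ring
        linarith
    _ = k * c ^ 2 / 2 * (b - a) := by rw [intervalIntegral.integral_const, smul_eq_mul, mul_comm]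

theorem hasDerivAt_integral_sub_const (hf : Continuous f) (T t : ℝ) :
    HasDerivAt (fun τ => ∫ s in τ - T..τ, f s) (f t - f (t - T)) t := by
  have hprim (x : ℝ) : HasDerivAt (fun τ => ∫ s in 0..τ, f s) (f x) x :=
    (hf.integral_hasStrictDerivAt 0 x).hasDerivAt
  refine ((hprim t).sub ((hprim (t - T)).comp_sub_const t T)).congr_of_eventuallyEq
    (Eventually.of_forall fun τ => ?_)
  exact (integral_interval_sub_left (hf.intervalIntegrable _ _) (hf.intervalIntegrable _ _)).symm

end IntervalIntegral

/-! ### Star-shaped feedback laws -/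

/-- Odd non-decreasing `L`-Lipschitz feedback nonlinearities whose gain `σ x / x` is positive and
non-increasing on `(0, ∞)`, i.e. whose hypograph there is star-shaped about the origin. -/
structure IsStarFeedback (L : ℝ≥0) (σ : ℝ → ℝ) : Prop where
  odd : Function.Odd σ
  monotone : Monotone σ
  lipschitz : LipschitzWith L σ
  pos : ∀ x, 0 < x → 0 < σ x
  antitoneOn_div : AntitoneOn (fun x => σ x / x) (Ioi 0)

theorem IsSaturation.exists_isStarFeedback {σ : ℝ → ℝ} (h : IsSaturation σ) :
    ∃ L, IsStarFeedback L σ := by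
  obtain ⟨hodd, ⟨L, hL⟩, hsign, -, -, hmono, hdiff, hanti⟩ := h
  have hconc : ConcaveOn ℝ (Ici 0) σ :=
    AntitoneOn.concaveOn_of_deriv (convex_Ici 0) hL.continuous.continuousOn
      (by rwa [interior_Ici]) (by rwa [interior_Ici])
  refine ⟨L, hodd, hmono, hL, fun x hx => pos_of_mul_pos_left (hsign x hx.ne') hx.le, ?_⟩
  intro x (hx : 0 < x) y _ hxy
  rcases hxy.eq_or_lt with rfl | hxy
  · exact le_rfl
  · have hslope := hconc.neg.secant_mono (a := 0) (x := x) (y := y) self_mem_Ici hx.le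
      (hx.trans hxy).le hx.ne' (hx.trans hxy).ne' hxy.le
    simpa only [Pi.neg_apply, Function.Odd.map_zero hodd, neg_zero, sub_zero, neg_div,
      neg_le_neg_iff] using hslope

namespace IsStarFeedback

variable {L : ℝ≥0} {σ : ℝ → ℝ}

theorem continuous (h : IsStarFeedback L σ) : Continuous σ := h.lipschitz.continuous

theorem map_zero (h : IsStarFeedback L σ) : σ 0 = 0 := h.odd.map_zero

theorem nonneg (h : IsStarFeedback L σ) {x : ℝ} (hx : 0 ≤ x) : 0 ≤ σ x :=
  h.map_zero ▸ h.monotone hx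

theorem abs_apply (h : IsStarFeedback L σ) (x : ℝ) : |σ x| = σ |x| := by
  rcases le_total 0 x with hx | hx
  · rw [abs_of_nonneg hx, abs_of_nonneg (h.nonneg hx)]
  · rw [abs_of_nonpos hx, h.odd, abs_of_nonpos (h.map_zero ▸ h.monotone hx)]

theorem lipschitz_pos (h : IsStarFeedback L σ) : 0 < L := by
  have hlip : |σ 1 - σ 0| ≤ L * |1 - 0| := h.lipschitz.dist_le_mul 1 0
  rw [h.map_zero, sub_zero, sub_zero, abs_one, mul_one] at hlip
  exact NNReal.coe_pos.1 ((h.pos 1 one_pos).trans_le ((le_abs_self _).trans hlip))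

theorem abs_apply_le (h : IsStarFeedback L σ) (x : ℝ) : |σ x| ≤ L * |x| := by
  have hlip : |σ x - σ 0| ≤ L * |x - 0| := h.lipschitz.dist_le_mul x 0
  rwa [h.map_zero, sub_zero, sub_zero] at hlip

theorem apply_mul_le (h : IsStarFeedback L σ) {c r : ℝ} (hc : 1 ≤ c) (hr : 0 ≤ r) :
    σ (c * r) ≤ c * σ r := by
  rcases hr.eq_or_lt with rfl | hr
  · simp only [mul_zero, h.map_zero, le_refl]
  · have hcr : 0 < c * r := mul_pos (by linarith) hr
    have hgain := h.antitoneOn_div hr hcr (le_mul_of_one_le_left hr.le hc)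
    rw [div_le_div_iff₀ hcr hr] at hgain
    nlinarith

theorem mul_apply_le (h : IsStarFeedback L σ) {l r : ℝ} (hl₀ : 0 < l) (hl₁ : l ≤ 1) (hr : 0 ≤ r) :
    l * σ r ≤ σ (l * r) := by
  have := h.apply_mul_le (one_le_inv₀ hl₀ |>.2 hl₁) (mul_nonneg hl₀.le hr)
  rwa [inv_mul_cancel_left₀ hl₀.ne', ← div_eq_inv_mul, le_div_iff₀' hl₀] at this

theorem sector_le (h : IsStarFeedback L σ) {r C g : ℝ} (hr : 0 < r) (hC : |C| ≤ r)
    (hg : |g - C| ≤ r / 32) :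
    σ r * (C ^ 2 / 2 - r ^ 2 / 8) ≤ r * (σ g * C) := by
  wlog hC₀ : 0 ≤ C generalizing C g
  · have := this (C := -C) (g := -g) (by rwa [abs_neg]) (by rwa [← abs_neg, neg_sub_neg,
      neg_sub]) (by linarith)
    rw [h.odd] at this
    linarith [neg_sq C, neg_mul_neg (σ g) C]
  have hσr := h.pos r hr
  rw [abs_of_nonneg hC₀] at hC
  obtain ⟨hg₁, _⟩ := abs_le.1 hg
  by_cases hlarge : 0 < C ∧ C / 2 ≤ g
  · have hgain : C / (2 * r) * σ r ≤ σ (C / 2) := by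
      have := h.mul_apply_le (l := C / (2 * r)) (by have := hlarge.1; positivity)
        (by rw [div_le_one (by positivity)]; linarith) hr.le
      rwa [show C / (2 * r) * r = C / 2 by field_simp] at this
    calc σ r * (C ^ 2 / 2 - r ^ 2 / 8) ≤ r * (C / (2 * r) * σ r * C) := by
          field_simp
          nlinarith [sq_nonneg r]
      _ ≤ r * (σ g * C) := by
          gcongr
          exact hgain.trans (h.monotone hlarge.2)
  · have hsmall : C ≤ r / 16 := by
      by_contra! hcon
      exact hlarge ⟨by linarith, by linarith⟩
    have hσg : -σ r ≤ σ g := by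
      rw [← h.odd]
      exact h.monotone (by linarith)
    have : -(σ r * C) ≤ σ g * C := by nlinarith
    nlinarith [mul_nonneg hσr.le hr.le, mul_nonneg hσr.le hC₀]

end IsStarFeedback

/-- The potential `∫₀ˣ σ` of a feedback law `σ`. -/
def potential (σ : ℝ → ℝ) (x : ℝ) : ℝ := ∫ y in 0..x, σ y

namespace IsStarFeedback

variable {L : ℝ≥0} {σ : ℝ → ℝ}

theorem continuous_potential (h : IsStarFeedback L σ) : Continuous (potential σ) :=
  continuous_primitive (fun _ _ => h.continuous.intervalIntegrable _ _) 0

theorem potential_nonneg (h : IsStarFeedback L σ) (x : ℝ) : 0 ≤ potential σ x := by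
  have := integral_le_of_monotone h.monotone (a := x) (b := 0)
  rw [h.map_zero, zero_mul, integral_symm] at this
  exact neg_nonpos.1 this

theorem potential_le (h : IsStarFeedback L σ) (x : ℝ) : potential σ x ≤ L / 2 * x ^ 2 := by
  simpa only [potential, h.map_zero, zero_mul, zero_add, sub_zero] using
    integral_le_of_lipschitzWith h.lipschitz (a := 0) (b := x)

theorem potential_sub_potential_le (h : IsStarFeedback L σ) (a b : ℝ) :
    potential σ b - potential σ a ≤ σ b * (b - a) - (σ b - σ a) ^ 2 / (2 * L) := by
  rw [potential, potential, integral_interval_sub_left (h.continuous.intervalIntegrable _ _)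
    (h.continuous.intervalIntegrable _ _)]
  exact integral_le_of_monotone_of_lipschitzWith h.lipschitz_pos h.monotone h.lipschitz

end IsStarFeedback

/-! ### Rotating coordinates -/

/-- The rotating phase `e^{iωt}`. -/
def rot (ω t : ℝ) : ℂ := Complex.exp ((ω * t : ℝ) * Complex.I)

section Rotation

variable {ω : ℝ}

theorem norm_rot (ω t : ℝ) : ‖rot ω t‖ = 1 := Complex.norm_exp_ofReal_mul_I _

theorem hasDerivAt_rot (ω t : ℝ) : HasDerivAt (rot ω) (ω * Complex.I * rot ω t) t := by
  have hphase : HasDerivAt (fun s : ℝ => ((ω * s : ℝ) : ℂ) * Complex.I) (ω * Complex.I) t := by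
    simpa using (((hasDerivAt_id t).const_mul ω).ofReal_comp).mul_const Complex.I
  exact hphase.cexp.congr_deriv (mul_comm _ _)

@[fun_prop]
theorem continuous_rot (ω : ℝ) : Continuous (rot ω) := by
  unfold rot
  fun_prop

theorem rot_mul_conj_rot (ω t : ℝ) : rot ω t * conj (rot ω t) = 1 := by
  rw [Complex.mul_conj, Complex.normSq_eq_norm_sq, norm_rot, one_pow, Complex.ofReal_one]

theorem rot_periodic (hω : ω ≠ 0) : (rot ω).Periodic (2 * π / |ω|) := by
  intro t
  rcases abs_choice ω with h | h <;> rw [h, rot, rot, Complex.exp_eq_exp_iff_exists_int]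
  · refine ⟨1, ?_⟩
    rw [mul_add, mul_div_cancel₀ _ hω]
    push_cast
    ring
  · refine ⟨-1, ?_⟩
    rw [mul_add, div_neg, mul_neg, mul_div_cancel₀ _ hω]
    push_cast
    ring

theorem abs_re_rot_mul_le (ω t : ℝ) (z : ℂ) : |(rot ω t * z).re| ≤ ‖z‖ :=
  (Complex.abs_re_le_norm _).trans_eq (by rw [norm_mul, norm_rot, one_mul])

theorem re_sq_eq (z : ℂ) : z.re ^ 2 = (‖z‖ ^ 2 + (z ^ 2).re) / 2 := by
  rw [← Complex.normSq_eq_norm_sq, Complex.normSq_apply, sq z, Complex.mul_re]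
  ring

theorem hasDerivAt_re {f : ℝ → ℂ} {f' : ℂ} {t : ℝ} (h : HasDerivAt f f' t) :
    HasDerivAt (fun s => (f s).re) f'.re t :=
  Complex.reCLM.hasFDerivAt.comp_hasDerivAt t h

theorem integral_re_rot_mul_sq {T : ℝ} (hω : ω ≠ 0) (hT : (rot ω).Periodic T) (p : ℂ) (τ : ℝ) :
    ∫ s in τ - T..τ, (rot ω s * p).re ^ 2 = T / 2 * ‖p‖ ^ 2 := by
  set F : ℝ → ℝ := fun s => (‖p‖ ^ 2 * s + (rot ω s ^ 2 * (p ^ 2 / (2 * ω * Complex.I))).re) / 2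
    with hF
  have hderiv (s : ℝ) : HasDerivAt F ((rot ω s * p).re ^ 2) s := by
    have hosc := hasDerivAt_re
      (((hasDerivAt_rot ω s).pow 2).mul_const (p ^ 2 / (2 * ω * Complex.I)))
    refine ((((hasDerivAt_id s).const_mul (‖p‖ ^ 2)).add hosc).div_const 2).congr_deriv ?_
    have hωc : (ω : ℂ) ≠ 0 := Complex.ofReal_ne_zero.2 hω
    rw [re_sq_eq, norm_mul, norm_rot, one_mul, mul_one, mul_pow]
    congr 3
    push_cast
    field_simp [Complex.I_ne_zero]
  rw [integral_eq_sub_of_hasDerivAt (fun s _ => hderiv s)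
    (Continuous.intervalIntegrable (by fun_prop) _ _), hF]
  simp only [hT.sub_eq]
  ring

end Rotation

/-- The scalar output `Re (e^{iωt} (κ² w₁ + κ w₂))` fed back by the low-gain control, along a curve
`w = (w₁, w₂)` in rotating coordinates. -/
def output (ω κ : ℝ) (w : ℝ → ℂ × ℂ) (t : ℝ) : ℝ :=
  (rot ω t * (κ ^ 2 * (w t).1 + κ * (w t).2)).re

theorem continuous_output (ω κ : ℝ) {w : ℝ → ℂ × ℂ} (hw : Continuous w) :
    Continuous (output ω κ w) := by
  unfold output
  fun_prop

/-- The control value `σ (output)`. -/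
def input (σ : ℝ → ℝ) (ω κ : ℝ) (w : ℝ → ℂ × ℂ) (t : ℝ) : ℝ := σ (output ω κ w t)

/-- `w` solves, for `t ≥ t₀`, the closed loop in rotating coordinates, where the double oscillator
becomes the double integrator `ẇ₁ = w₂`, `ẇ₂ = -σ(y) e^{-iωt}`. Continuity is required on all of
`ℝ`, so that integrals over windows reaching before `t₀` make sense. -/
structure IsTrajectory (σ : ℝ → ℝ) (ω κ t₀ : ℝ) (w : ℝ → ℂ × ℂ) : Prop where
  continuous : Continuous w
  hasDerivWithinAt : ∀ t, t₀ ≤ t →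
    HasDerivWithinAt w ((w t).2, -(input σ ω κ w t * conj (rot ω t))) (Ici t₀) t

namespace IsTrajectory

variable {σ : ℝ → ℝ} {ω κ t₀ : ℝ} {w : ℝ → ℂ × ℂ}

theorem mono (h : IsTrajectory σ ω κ t₀ w) {t₁ : ℝ} (ht : t₀ ≤ t₁) : IsTrajectory σ ω κ t₁ w :=
  ⟨h.continuous, fun t ht' => (h.hasDerivWithinAt t (ht.trans ht')).mono (Ici_subset_Ici.2 ht)⟩

theorem hasDerivWithinAt_fst (h : IsTrajectory σ ω κ t₀ w) {t : ℝ} (ht : t₀ ≤ t) :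
    HasDerivWithinAt (fun s => (w s).1) (w t).2 (Ici t₀) t := by
  simpa using (h.hasDerivWithinAt t ht).hasFDerivWithinAt.fst.hasDerivWithinAt

theorem hasDerivWithinAt_snd (h : IsTrajectory σ ω κ t₀ w) {t : ℝ} (ht : t₀ ≤ t) :
    HasDerivWithinAt (fun s => (w s).2) (-(input σ ω κ w t * conj (rot ω t))) (Ici t₀) t := by
  simpa using (h.hasDerivWithinAt t ht).hasFDerivWithinAt.snd.hasDerivWithinAt

theorem hasDerivAt_snd (h : IsTrajectory σ ω κ t₀ w) {t : ℝ} (ht : t₀ < t) :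
    HasDerivAt (fun s => (w s).2) (-(input σ ω κ w t * conj (rot ω t))) t :=
  (h.hasDerivWithinAt_snd ht.le).hasDerivAt (Ici_mem_nhds ht)

theorem continuous_input {L : ℝ≥0} (h : IsTrajectory σ ω κ t₀ w) (hσ : IsStarFeedback L σ) :
    Continuous (input σ ω κ w) := hσ.continuous.comp (continuous_output ω κ h.continuous)

theorem norm_snd_sub_snd_le (h : IsTrajectory σ ω κ t₀ w) {s t M : ℝ} (hs : t₀ ≤ s) (hst : s ≤ t)
    (hM : ∀ x ∈ Icc s t, |input σ ω κ w x| ≤ M) : ‖(w t).2 - (w s).2‖ ≤ M * (t - s) := by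
  refine norm_image_sub_le_of_norm_deriv_le_segment'
    (fun x hx => (h.hasDerivWithinAt_snd (hs.trans hx.1)).mono fun y hy => hs.trans hy.1)
    (fun x hx => ?_) t (right_mem_Icc.2 hst)
  rw [norm_neg, norm_mul, RCLike.norm_conj, norm_rot, mul_one, Complex.norm_real]
  exact hM x (Ico_subset_Icc_self hx)

theorem norm_fst_sub_fst_sub_smul_le (h : IsTrajectory σ ω κ t₀ w) {s t M : ℝ} (hs : t₀ ≤ s)
    (hst : s ≤ t) (hM : ∀ x ∈ Icc s t, |input σ ω κ w x| ≤ M) :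
    ‖(w t).1 - (w s).1 - (t - s) • (w t).2‖ ≤ M * (t - s) ^ 2 := by
  have hderiv (x : ℝ) (hx : x ∈ Icc s t) : HasDerivWithinAt (fun y => (w y).1 - y • (w t).2)
      ((w x).2 - (w t).2) (Icc s t) x := by
    simpa using ((h.hasDerivWithinAt_fst (hs.trans hx.1)).mono fun y hy => hs.trans hy.1).fun_sub
      ((hasDerivWithinAt_id x _).smul_const (w t).2)
  have hM₀ : 0 ≤ M := (abs_nonneg _).trans (hM s (left_mem_Icc.2 hst))
  have := norm_image_sub_le_of_norm_deriv_le_segment' hderiv (C := M * (t - s)) (fun x hx => by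
    rw [norm_sub_rev]
    refine (h.norm_snd_sub_snd_le (hs.trans hx.1) hx.2.le
      fun y hy => hM y ⟨hx.1.trans hy.1, hy.2⟩).trans ?_
    gcongr
    exact hx.1) t (right_mem_Icc.2 hst)
  calc ‖(w t).1 - (w s).1 - (t - s) • (w t).2‖
      = ‖(w t).1 - t • (w t).2 - ((w s).1 - s • (w t).2)‖ := by congr 1; module
    _ ≤ M * (t - s) ^ 2 := this.trans_eq (by ring)

end IsTrajectory

/-! ### The energy functional -/

theorem inner_ofReal_mul_conj (u : ℝ) (z Q : ℂ) : ⟪(u : ℂ) * conj z, Q⟫ = u * (z * Q).re := by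
  rw [Complex.inner, map_mul, Complex.conj_conj, Complex.conj_ofReal, mul_left_comm,
    Complex.re_ofReal_mul, mul_comm Q]

/-- Minus the increment of `w₂` over the preceding interval of length `T`. -/
def drift (T : ℝ) (w : ℝ → ℂ × ℂ) (t : ℝ) : ℂ := (w (t - T)).2 - (w t).2

/-- The Lyapunov functional: quadratic in `w₂`, plus the average of the potential of the output over
the preceding interval of length `T`. -/
def energy (σ : ℝ → ℝ) (ω κ T : ℝ) (w : ℝ → ℂ × ℂ) (t : ℝ) : ℝ :=
  κ ^ 2 / 2 * ‖(w t).2‖ ^ 2 + 1 / T * ∫ s in t - T..t, potential σ (output ω κ w s)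

theorem output_sub_output {ω T : ℝ} (hT : (rot ω).Periodic T) (κ : ℝ) (w : ℝ → ℂ × ℂ) (s : ℝ) :
    output ω κ w s - output ω κ w (s - T) =
      κ ^ 2 * (rot ω s * ((w s).1 - (w (s - T)).1 - T • (w s).2)).re
        + κ ^ 2 * T * (rot ω s * (w s).2).re - κ * (rot ω s * drift T w s).re := by
  rw [output, output, drift, hT.sub_eq, ← Complex.ofReal_pow]
  simp only [Complex.mul_re, Complex.add_re, Complex.sub_re, Complex.add_im, Complex.sub_im,
    Complex.mul_im, Complex.ofReal_re, Complex.ofReal_im, Complex.smul_re, Complex.smul_im,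
    smul_eq_mul]
  ring

namespace IsTrajectory

variable {L : ℝ≥0} {σ : ℝ → ℝ} {ω κ t₀ T : ℝ} {w : ℝ → ℂ × ℂ}

theorem integral_input_mul_re (hσ : IsStarFeedback L σ) (h : IsTrajectory σ ω κ t₀ w) {a b : ℝ}
    (ha : t₀ ≤ a) (hab : a ≤ b) (Q : ℂ) :
    ∫ s in a..b, input σ ω κ w s * (rot ω s * Q).re = ⟪(w a).2 - (w b).2, Q⟫ := by
  have hw := h.continuous
  have hu := h.continuous_input hσ
  have hderiv (s : ℝ) (hs : s ∈ Ioo a b) : HasDerivAt (fun s => -⟪(w s).2, Q⟫)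
      (input σ ω κ w s * (rot ω s * Q).re) s := by
    refine (((h.hasDerivAt_snd (ha.trans_lt hs.1)).inner ℝ
      (hasDerivAt_const s Q)).fun_neg).congr_deriv ?_
    rw [inner_zero_right, zero_add, inner_neg_left, neg_neg, inner_ofReal_mul_conj]
  rw [integral_eq_sub_of_hasDerivAt_of_le hab (by fun_prop) hderiv
    (Continuous.intervalIntegrable (by fun_prop) _ _), inner_sub_left]
  ring

theorem norm_drift_sub_drift_le (hσ : IsStarFeedback L σ) (h : IsTrajectory σ ω κ t₀ w)
    (hT : (rot ω).Periodic T) (hT₀ : 0 < T) {s t : ℝ} (hs : t₀ ≤ s - T) (hst : s ≤ t) :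
    ‖drift T w t - drift T w s‖ ≤
      ∫ x in s..t, |input σ ω κ w x - input σ ω κ w (x - T)| := by
  have hw := h.continuous
  have hu := h.continuous_input hσ
  have hderiv (x : ℝ) (hx : x ∈ Ioo s t) : HasDerivAt (drift T w)
      ((input σ ω κ w x - input σ ω κ w (x - T) : ℝ) * conj (rot ω x)) x := by
    refine (((h.hasDerivAt_snd (by linarith [hx.1])).comp_sub_const x T).sub
      (h.hasDerivAt_snd (by linarith [hx.1]))).congr_deriv ?_
    rw [hT.sub_eq, Complex.ofReal_sub]
    ring
  refine norm_sub_le_integral_of_norm_deriv_le_of_le hst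
    (by unfold drift; fun_prop) (fun x hx => (hderiv x hx).differentiableAt.differentiableWithinAt)
    (Eventually.of_forall fun x hx => ?_) (Continuous.intervalIntegrable (by fun_prop) _ _)
  rw [(hderiv x hx).deriv, norm_mul, RCLike.norm_conj, norm_rot, mul_one, Complex.norm_real,
    Real.norm_eq_abs]

theorem hasDerivAt_energy (hσ : IsStarFeedback L σ) (h : IsTrajectory σ ω κ t₀ w) {t : ℝ}
    (ht : t₀ < t) :
    HasDerivAt (energy σ ω κ T w)
      (-κ ^ 2 * input σ ω κ w t * (rot ω t * (w t).2).re
        + 1 / T * (potential σ (output ω κ w t) - potential σ (output ω κ w (t - T)))) t := by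
  have hpot := hasDerivAt_integral_sub_const
    (hσ.continuous_potential.comp (continuous_output ω κ h.continuous)) T t
  refine (((h.hasDerivAt_snd ht).norm_sq.const_mul (κ ^ 2 / 2)).add
    (hpot.const_mul (1 / T))).congr_deriv ?_
  rw [real_inner_comm, inner_neg_left, inner_ofReal_mul_conj]
  simp only [Function.comp_apply]
  ring

theorem energy_rate_le (hσ : IsStarFeedback L σ) (h : IsTrajectory σ ω κ t₀ w)
    (hT : (rot ω).Periodic T) (hT₀ : 0 < T) {s M : ℝ} (hs : t₀ ≤ s - T)
    (hM : ∀ x ∈ Icc (s - T) s, |input σ ω κ w x| ≤ M) :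
    -κ ^ 2 * input σ ω κ w s * (rot ω s * (w s).2).re
        + 1 / T * (potential σ (output ω κ w s) - potential σ (output ω κ w (s - T))) ≤
      κ ^ 2 * T * M ^ 2 - κ / T * (input σ ω κ w s * (rot ω s * drift T w s).re)
        - 1 / (2 * (L * T)) * (input σ ω κ w s - input σ ω κ w (s - T)) ^ 2 := by
  set u := input σ ω κ w
  set X := (rot ω s * ((w s).1 - (w (s - T)).1 - T • (w s).2)).re
  have hX_le : |X| ≤ M * T ^ 2 := (abs_re_rot_mul_le _ _ _).trans <| by
    simpa only [sub_sub_cancel] using h.norm_fst_sub_fst_sub_smul_le hs (by linarith) hM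
  have huX : u s * X ≤ M * (M * T ^ 2) := by
    have huM : |u s| ≤ M := hM s (right_mem_Icc.2 (by linarith))
    calc u s * X ≤ |u s| * |X| := (le_abs_self _).trans (abs_mul _ _).le
      _ ≤ M * (M * T ^ 2) := mul_le_mul huM hX_le (abs_nonneg _) ((abs_nonneg _).trans huM)
  have hpot : potential σ (output ω κ w s) - potential σ (output ω κ w (s - T)) ≤
      u s * (κ ^ 2 * X + κ ^ 2 * T * (rot ω s * (w s).2).re - κ * (rot ω s * drift T w s).re)
        - (u s - u (s - T)) ^ 2 / (2 * L) := by
    rw [← output_sub_output hT]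
    exact hσ.potential_sub_potential_le _ _
  calc -κ ^ 2 * u s * (rot ω s * (w s).2).re
        + 1 / T * (potential σ (output ω κ w s) - potential σ (output ω κ w (s - T)))
      ≤ -κ ^ 2 * u s * (rot ω s * (w s).2).re + 1 / T * (u s * (κ ^ 2 * X
          + κ ^ 2 * T * (rot ω s * (w s).2).re - κ * (rot ω s * drift T w s).re)
          - (u s - u (s - T)) ^ 2 / (2 * L)) := by gcongr
    _ = κ ^ 2 / T * (u s * X) - κ / T * (u s * (rot ω s * drift T w s).re)
          - 1 / (2 * (L * T)) * (u s - u (s - T)) ^ 2 := by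
        have hL := hσ.lipschitz_pos.ne'
        field_simp
        ring
    _ ≤ κ ^ 2 / T * (M * (M * T ^ 2)) - κ / T * (u s * (rot ω s * drift T w s).re)
          - 1 / (2 * (L * T)) * (u s - u (s - T)) ^ 2 := by gcongr
    _ = κ ^ 2 * T * M ^ 2 - κ / T * (u s * (rot ω s * drift T w s).re)
          - 1 / (2 * (L * T)) * (u s - u (s - T)) ^ 2 := by field_simp

/-- Freezing the drift at `τ` lets the cross term integrate to `‖drift T w τ‖ ^ 2`; the price is the
integral term, which the last term absorbs. -/
theorem energy_rate_le_frozen (hσ : IsStarFeedback L σ) (h : IsTrajectory σ ω κ t₀ w)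
    (hκ : 0 < κ) (hT : (rot ω).Periodic T) (hT₀ : 0 < T) {τ M : ℝ} (hτ : t₀ ≤ τ - 2 * T)
    (hM : ∀ x ∈ Icc (τ - 2 * T) τ, |input σ ω κ w x| ≤ M) {s : ℝ} (hs : s ∈ Icc (τ - T) τ) :
    -κ ^ 2 * input σ ω κ w s * (rot ω s * (w s).2).re
        + 1 / T * (potential σ (output ω κ w s) - potential σ (output ω κ w (s - T))) ≤
      κ ^ 2 * T * M ^ 2
        + κ / T * (M * ∫ x in τ - T..τ, |input σ ω κ w x - input σ ω κ w (x - T)|)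
        - κ / T * (input σ ω κ w s * (rot ω s * drift T w τ).re)
        - 1 / (2 * (L * T)) * (input σ ω κ w s - input σ ω κ w (s - T)) ^ 2 := by
  obtain ⟨hs₁, hs₂⟩ := hs
  have hu := h.continuous_input hσ
  set I := ∫ x in τ - T..τ, |input σ ω κ w x - input σ ω κ w (x - T)|
  have hdrift : ‖drift T w τ - drift T w s‖ ≤ I :=
    (h.norm_drift_sub_drift_le hσ hT hT₀ (by linarith) hs₂).trans <|
      integral_mono_interval hs₁ hs₂ le_rfl (Eventually.of_forall fun _ => abs_nonneg _)
        (Continuous.intervalIntegrable (by fun_prop) _ _)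
  have hre : input σ ω κ w s * ((rot ω s * drift T w τ).re - (rot ω s * drift T w s).re) ≤
      M * I := by
    have huM : |input σ ω κ w s| ≤ M := hM s ⟨by linarith, hs₂⟩
    rw [← Complex.sub_re, ← mul_sub]
    refine ((le_abs_self _).trans (abs_mul _ _).le).trans ?_
    exact mul_le_mul huM ((abs_re_rot_mul_le _ _ _).trans hdrift) (abs_nonneg _)
      ((abs_nonneg _).trans huM)
  have hrate := h.energy_rate_le hσ hT hT₀ (s := s) (M := M) (by linarith)
    fun x hx => hM x ⟨by linarith [hx.1], hx.2.trans hs₂⟩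
  have := mul_le_mul_of_nonneg_left hre (div_pos hκ hT₀).le
  linarith

theorem energy_le_energy_sub (hσ : IsStarFeedback L σ) (h : IsTrajectory σ ω κ t₀ w)
    (hκ : 0 < κ) (hT : (rot ω).Periodic T) (hT₀ : 0 < T) {τ M : ℝ} (hτ : t₀ ≤ τ - 2 * T)
    (hM : ∀ x ∈ Icc (τ - 2 * T) τ, |input σ ω κ w x| ≤ M) :
    energy σ ω κ T w τ ≤ energy σ ω κ T w (τ - T) - κ / T * ‖drift T w τ‖ ^ 2
      + κ ^ 2 * (1 + L / 2) * T ^ 2 * M ^ 2 := by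
  have hu := h.continuous_input hσ
  have hL : (0 : ℝ) < L := hσ.lipschitz_pos
  have hrate := fun s hs => h.energy_rate_le_frozen hσ hκ hT hT₀ hτ hM (s := s) hs
  set I := ∫ x in τ - T..τ, |input σ ω κ w x - input σ ω κ w (x - T)|
  set Q := drift T w τ with hQ
  have hint := sub_le_integral_of_hasDeriv_right_of_le (by linarith : τ - T ≤ τ)
    (fun s hs => (h.hasDerivAt_energy hσ (by linarith [hs.1])).continuousAt.continuousWithinAt)
    (fun s hs => (h.hasDerivAt_energy hσ (by linarith [hs.1])).hasDerivWithinAt)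
    (Continuous.integrableOn_Icc (by fun_prop)) fun s hs => hrate s (Ioo_subset_Icc_self hs)
  have hcross : ∫ s in τ - T..τ, input σ ω κ w s * (rot ω s * Q).re = ‖Q‖ ^ 2 := by
    rw [h.integral_input_mul_re hσ (by linarith) (by linarith), hQ, drift,
      real_inner_self_eq_norm_sq]
  rw [integral_const_sub_mul_sub_mul (by fun_prop) (by fun_prop), hcross, sub_sub_cancel,
    add_mul] at hint
  have hyoung := mul_integral_abs_sub_integral_sq_le
    (f := fun s => input σ ω κ w s - input σ ω κ w (s - T)) (by fun_prop) (by linarith : τ - T ≤ τ)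
    (κ * M) (mul_pos hL hT₀)
  rw [sub_sub_cancel] at hyoung
  have hI : κ / T * (M * I) * T = κ * M * I := by field_simp
  nlinarith

end IsTrajectory

/-! ### Drift on a good period -/

theorem exists_window_norm_le {E : Type*} [NormedAddCommGroup E] [NormedSpace ℝ E] (a v : E)
    (t : ℝ) {T : ℝ} (hT : 0 ≤ T) {N : ℕ} (hN : 0 < N) :
    ∃ j < N, ∃ s₀ ∈ Icc (t - j * T - T) (t - j * T),
      ‖a‖ ≤ ‖a + (s₀ - t) • v‖ ∧ N * T * ‖v‖ ≤ 2 * ‖a + (s₀ - t) • v‖ := by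
  have hfar : N * T * ‖v‖ ≤ ‖a‖ + ‖a + (t - N * T - t) • v‖ := by
    calc N * T * ‖v‖ = ‖a - (a + (t - N * T - t) • v)‖ := by
          rw [sub_add_cancel_left, ← neg_smul, norm_smul, sub_sub_cancel_left, neg_neg,
            Real.norm_of_nonneg (by positivity)]
      _ ≤ _ := norm_sub_le _ _
  rcases le_total ‖a + (t - N * T - t) • v‖ ‖a‖ with hle | hle
  · refine ⟨0, hN, t, by simp [hT], ?_⟩
    rw [sub_self, zero_smul, add_zero]
    exact ⟨le_rfl, by linarith⟩
  · refine ⟨N - 1, Nat.sub_lt hN one_pos, t - N * T, ?_, hle, by linarith⟩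
    rw [Nat.cast_pred hN]
    constructor <;> linarith

/-- The complex amplitude that the output has at time `s` on the solution of the uncontrolled system
passing through `w t` at time `t`. -/
def freeAmplitude (κ : ℝ) (w : ℝ → ℂ × ℂ) (t s : ℝ) : ℂ :=
  κ ^ 2 * (w t).1 + κ * (w t).2 + (s - t) • (κ ^ 2 * (w t).2)

namespace IsTrajectory

variable {L : ℝ≥0} {σ : ℝ → ℝ} {ω κ t₀ T : ℝ} {w : ℝ → ℂ × ℂ}

theorem energy_le_energy_sub_nat_mul (hσ : IsStarFeedback L σ) (h : IsTrajectory σ ω κ t₀ w)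
    (hκ : 0 < κ) (hT : (rot ω).Periodic T) (hT₀ : 0 < T) {t M : ℝ} (n : ℕ)
    (ht : t₀ ≤ t - (n + 1) * T) (hM : ∀ x ∈ Icc (t - (n + 1) * T) t, |input σ ω κ w x| ≤ M) :
    energy σ ω κ T w t ≤ energy σ ω κ T w (t - n * T)
      - κ / T * ∑ j ∈ Finset.range n, ‖drift T w (t - j * T)‖ ^ 2
      + n * (κ ^ 2 * (1 + L / 2) * T ^ 2 * M ^ 2) := by
  induction n with
  | zero => simp
  | succ n ih =>
    push_cast at ht hM
    have hprev := ih (by linarith) fun x hx => hM x ⟨by linarith [hx.1], hx.2⟩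
    have hnT : 0 ≤ n * T := by positivity
    have hstep := h.energy_le_energy_sub hσ hκ hT hT₀ (τ := t - n * T) (M := M) (by linarith)
      fun x hx => hM x ⟨by linarith [hx.1], by linarith [hx.2]⟩
    rw [show t - n * T - T = t - ((n + 1 : ℕ) : ℝ) * T by push_cast; ring] at hstep
    rw [Finset.sum_range_succ]
    push_cast at hstep ⊢
    linarith

theorem le_norm_drift (hσ : IsStarFeedback L σ) (h : IsTrajectory σ ω κ t₀ w) (hω : ω ≠ 0)
    (hT : (rot ω).Periodic T) (hT₀ : 0 < T) {τ : ℝ} (hτ : t₀ ≤ τ - T) {p : ℂ} {g : ℝ → ℝ}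
    (hg : ∀ s ∈ Icc (τ - T) τ, |g s - (rot ω s * p).re| ≤ ‖p‖ / 32)
    (hu : ∀ s ∈ Icc (τ - T) τ, |input σ ω κ w s - σ (g s)| ≤ σ ‖p‖ / 16) :
    σ ‖p‖ * T / 16 ≤ ‖drift T w τ‖ := by
  set r := ‖p‖ with hr
  rcases (norm_nonneg p).eq_or_lt with hp | hp
  · rw [hr, ← hp, hσ.map_zero, zero_mul, zero_div]
    exact norm_nonneg _
  have huc := h.continuous_input hσ
  have hpointwise : ∀ s ∈ Icc (τ - T) τ,
      σ r / 2 * (rot ω s * p).re ^ 2 - 3 / 16 * σ r * r ^ 2 ≤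
        r * (input σ ω κ w s * (rot ω s * p).re) := fun s hs => by
    have hC : |(rot ω s * p).re| ≤ r := abs_re_rot_mul_le ω s p
    have hsector := hσ.sector_le hp hC (hg s hs)
    have herr : |(input σ ω κ w s - σ (g s)) * (rot ω s * p).re| ≤ σ r / 16 * r := by
      rw [abs_mul]
      exact mul_le_mul (hu s hs) hC (abs_nonneg _) (by linarith [hσ.pos r hp])
    have := mul_le_mul_of_nonneg_left (abs_le.1 herr).1 hp.le
    linarith
  have hint := integral_mono_on (μ := volume) (by linarith : τ - T ≤ τ)
    (Continuous.intervalIntegrable (by fun_prop) _ _)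
    (Continuous.intervalIntegrable (by fun_prop) _ _) hpointwise
  rw [intervalIntegral.integral_sub (Continuous.intervalIntegrable (by fun_prop) _ _) (by simp),
    intervalIntegral.integral_const_mul, intervalIntegral.integral_const_mul,
    intervalIntegral.integral_const_mul, intervalIntegral.integral_const,
    integral_re_rot_mul_sq hω hT, h.integral_input_mul_re hσ hτ (by linarith), smul_eq_mul,
    sub_sub_cancel, ← hr] at hint
  have hcs : r * ⟪drift T w τ, p⟫ ≤ r * (‖drift T w τ‖ * r) :=
    mul_le_mul_of_nonneg_left (real_inner_le_norm _ _) hp.le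
  rw [drift] at hcs ⊢
  exact le_of_mul_le_mul_left (by linarith) (pow_pos hp 2)

theorem abs_output_sub_le (h : IsTrajectory σ ω κ t₀ w) (hκ : 0 ≤ κ) {s t M : ℝ} (hs : t₀ ≤ s)
    (hst : s ≤ t) (hM : ∀ x ∈ Icc s t, |input σ ω κ w x| ≤ M) :
    |output ω κ w s - (rot ω s * freeAmplitude κ w t s).re| ≤
      (κ ^ 2 * (t - s) ^ 2 + κ * (t - s)) * M := by
  have hfst := h.norm_fst_sub_fst_sub_smul_le hs hst hM
  have hsnd := h.norm_snd_sub_snd_le hs hst hM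
  rw [output, ← Complex.sub_re, ← mul_sub]
  calc |(rot ω s * (κ ^ 2 * (w s).1 + κ * (w s).2 - freeAmplitude κ w t s)).re|
      ≤ ‖κ ^ 2 * (w s).1 + κ * (w s).2 - freeAmplitude κ w t s‖ := abs_re_rot_mul_le _ _ _
    _ = ‖κ ^ 2 • ((w t).1 - (w s).1 - (t - s) • (w t).2) + κ • ((w t).2 - (w s).2)‖ := by
        rw [← norm_neg, freeAmplitude]
        simp only [Complex.real_smul]
        push_cast
        congr 1
        ring
    _ ≤ κ ^ 2 * (M * (t - s) ^ 2) + κ * (M * (t - s)) := by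
        refine (norm_add_le _ _).trans ?_
        rw [norm_smul, norm_smul, Real.norm_of_nonneg (sq_nonneg κ), Real.norm_of_nonneg hκ]
        gcongr
    _ = (κ ^ 2 * (t - s) ^ 2 + κ * (t - s)) * M := by ring

theorem input_bounds_of_norm_freeAmplitude_le (hσ : IsStarFeedback L σ)
    (h : IsTrajectory σ ω κ t₀ w) (hκ : 0 ≤ κ) {d r t : ℝ} (hd : 0 ≤ d)
    (hgain : L * (κ ^ 2 * d ^ 2 + κ * d) ≤ 1 / 128) (ht : t₀ ≤ t - d) (hr : 0 ≤ r)
    (hp : ∀ s ∈ Icc (t - d) t, ‖freeAmplitude κ w t s‖ ≤ 4 * r) {s : ℝ} (hs : s ∈ Icc (t - d) t) :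
    |input σ ω κ w s| ≤ 5 * σ r ∧
      |input σ ω κ w s - σ (rot ω s * freeAmplitude κ w t s).re| ≤ σ r / 16 := by
  obtain ⟨m, hm, hmax⟩ := isCompact_Icc.exists_isMaxOn
    (nonempty_Icc.2 (by linarith : t - d ≤ t)) (h.continuous_input hσ).abs.continuousOn
  set U := |input σ ω κ w m|
  have hU (x : ℝ) (hx : x ∈ Icc (t - d) t) : |input σ ω κ w x| ≤ U := hmax hx
  have hclose (x : ℝ) (hx : x ∈ Icc (t - d) t) :
      |input σ ω κ w x - σ (rot ω x * freeAmplitude κ w t x).re| ≤ U / 128 := by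
    have hxd : t - x ≤ d := by linarith [hx.1]
    have hx₀ : 0 ≤ t - x := by linarith [hx.2]
    calc |input σ ω κ w x - σ (rot ω x * freeAmplitude κ w t x).re|
        ≤ L * |output ω κ w x - (rot ω x * freeAmplitude κ w t x).re| :=
          hσ.lipschitz.dist_le_mul _ _
      _ ≤ L * ((κ ^ 2 * (t - x) ^ 2 + κ * (t - x)) * U) := by
          gcongr
          exact h.abs_output_sub_le hκ (by linarith) hx.2 fun y hy => hU y ⟨hx.1.trans hy.1, hy.2⟩
      _ ≤ L * ((κ ^ 2 * d ^ 2 + κ * d) * U) := by gcongr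
      _ ≤ U / 128 := by nlinarith [abs_nonneg (input σ ω κ w m)]
  have hfree : |σ (rot ω m * freeAmplitude κ w t m).re| ≤ 4 * σ r := by
    rw [hσ.abs_apply]
    exact (hσ.monotone ((abs_re_rot_mul_le _ _ _).trans (hp m hm))).trans
      (hσ.apply_mul_le (by norm_num) hr)
  have hUr : U ≤ 5 * σ r := by
    have := abs_sub_abs_le_abs_sub (input σ ω κ w m) (σ (rot ω m * freeAmplitude κ w t m).re)
    linarith [hclose m hm, hσ.nonneg hr]
  exact ⟨(hU s hs).trans hUr, (hclose s hs).trans (by linarith [hσ.nonneg hr])⟩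

end IsTrajectory

theorem norm_freeAmplitude_sub_le (κ : ℝ) (w : ℝ → ℂ × ℂ) (t : ℝ) {s s' d : ℝ}
    (hs : |s - s'| ≤ d) :
    ‖freeAmplitude κ w t s - freeAmplitude κ w t s'‖ ≤ d * ‖(κ ^ 2 * (w t).2 : ℂ)‖ := by
  rw [freeAmplitude, freeAmplitude, add_sub_add_left_eq_sub, ← sub_smul, sub_sub_sub_cancel_right,
    norm_smul, Real.norm_eq_abs]
  gcongr

theorem freeAmplitude_self (κ : ℝ) (w : ℝ → ℂ × ℂ) (t : ℝ) :
    freeAmplitude κ w t t = κ ^ 2 * (w t).1 + κ * (w t).2 := by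
  rw [freeAmplitude, sub_self, zero_smul, add_zero]

/-- The constant `C` in `‖z‖ ≤ C r` when the amplitude `κ² z₁ + κ z₂` and its increment over 64
windows of length `T` are of order `r`. -/
def amplitudeConst (κ T : ℝ) : ℝ := 1 / κ ^ 2 + 1 / (32 * T * κ ^ 3) + 1 / (32 * T * κ ^ 2)

theorem amplitudeConst_pos {κ T : ℝ} (hκ : 0 < κ) (hT : 0 < T) : 0 < amplitudeConst κ T := by
  unfold amplitudeConst
  positivity

theorem norm_le_amplitudeConst_mul {κ T r : ℝ} (hκ : 0 < κ) (hT : 0 < T) {z : ℂ × ℂ}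
    (hamp : ‖(κ ^ 2 * z.1 + κ * z.2 : ℂ)‖ ≤ r) (hslope : 64 * T * ‖(κ ^ 2 * z.2 : ℂ)‖ ≤ 2 * r) :
    ‖z‖ ≤ amplitudeConst κ T * r := by
  have hr : 0 ≤ r := (norm_nonneg _).trans hamp
  have hκn : ‖(κ : ℂ)‖ = κ := by rw [Complex.norm_real, Real.norm_of_nonneg hκ.le]
  have hsnd : ‖z.2‖ ≤ 1 / (32 * T * κ ^ 2) * r := by
    rw [norm_mul, norm_pow, hκn] at hslope
    rw [one_div_mul_eq_div, le_div_iff₀ (by positivity)]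
    linarith
  have hfst : ‖z.1‖ ≤ (1 / κ ^ 2 + 1 / (32 * T * κ ^ 3)) * r := by
    have hsum : κ ^ 2 * ‖z.1‖ ≤ r + κ * (1 / (32 * T * κ ^ 2) * r) :=
      calc κ ^ 2 * ‖z.1‖ = ‖(κ ^ 2 * z.1 + κ * z.2 - κ * z.2 : ℂ)‖ := by
            rw [add_sub_cancel_right, norm_mul, norm_pow, hκn]
        _ ≤ ‖(κ ^ 2 * z.1 + κ * z.2 : ℂ)‖ + κ * ‖z.2‖ := by
            simpa only [norm_mul, hκn] using norm_sub_le (κ ^ 2 * z.1 + κ * z.2 : ℂ) (κ * z.2)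
        _ ≤ _ := by gcongr
    refine le_of_mul_le_mul_left (hsum.trans_eq ?_) (pow_pos hκ 2)
    field_simp
  have h₁ : 0 ≤ (1 / κ ^ 2 + 1 / (32 * T * κ ^ 3)) * r := by positivity
  have h₂ : 0 ≤ 1 / (32 * T * κ ^ 2) * r := by positivity
  rw [amplitudeConst, add_mul]
  exact norm_prod_le_iff.2 ⟨by linarith, by linarith⟩

theorem energy_nonneg {L : ℝ≥0} {σ : ℝ → ℝ} (hσ : IsStarFeedback L σ) (ω κ : ℝ) {T : ℝ}
    (hT : 0 < T) (w : ℝ → ℂ × ℂ) (t : ℝ) : 0 ≤ energy σ ω κ T w t := by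
  have hpot := integral_nonneg (μ := volume) (by linarith : t - T ≤ t)
    fun s _ => hσ.potential_nonneg (output ω κ w s)
  unfold energy
  positivity

theorem abs_output_le {κ : ℝ} (hκ : 0 ≤ κ) (ω : ℝ) (w : ℝ → ℂ × ℂ) (t : ℝ) :
    |output ω κ w t| ≤ (κ ^ 2 + κ) * ‖w t‖ := by
  calc |output ω κ w t| ≤ ‖(κ ^ 2 * (w t).1 + κ * (w t).2 : ℂ)‖ := abs_re_rot_mul_le _ _ _
    _ ≤ κ ^ 2 * ‖(w t).1‖ + κ * ‖(w t).2‖ := by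
        refine (norm_add_le _ _).trans_eq ?_
        rw [norm_mul, norm_mul, norm_pow, Complex.norm_real, Real.norm_of_nonneg hκ]
    _ ≤ κ ^ 2 * ‖w t‖ + κ * ‖w t‖ := by
        gcongr
        exacts [norm_fst_le _, norm_snd_le _]
    _ = (κ ^ 2 + κ) * ‖w t‖ := by ring

theorem energy_le_mul_sq {L : ℝ≥0} {σ : ℝ → ℝ} (hσ : IsStarFeedback L σ) (ω : ℝ) {κ T : ℝ}
    (hκ : 0 ≤ κ) (hT : 0 < T) {w : ℝ → ℂ × ℂ} (hw : Continuous w) {t R : ℝ}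
    (hR : ∀ s ∈ Icc (t - T) t, ‖w s‖ ≤ R) :
    energy σ ω κ T w t ≤ (κ ^ 2 / 2 + L / 2 * (κ ^ 2 + κ) ^ 2) * R ^ 2 := by
  have hpot (s : ℝ) (hs : s ∈ Icc (t - T) t) :
      potential σ (output ω κ w s) ≤ L / 2 * ((κ ^ 2 + κ) * R) ^ 2 := by
    refine (hσ.potential_le _).trans ?_
    rw [← sq_abs]
    have := (abs_output_le hκ ω w s).trans (mul_le_mul_of_nonneg_left (hR s hs) (by positivity))
    gcongr
  have hint := integral_mono_on (μ := volume) (by linarith : t - T ≤ t)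
    ((hσ.continuous_potential.comp (continuous_output ω κ hw)).intervalIntegrable _ _)
    intervalIntegrable_const hpot
  rw [intervalIntegral.integral_const, sub_sub_cancel, smul_eq_mul] at hint
  have hsnd : ‖(w t).2‖ ≤ R := (norm_snd_le _).trans (hR t (right_mem_Icc.2 (by linarith)))
  calc energy σ ω κ T w t
      ≤ κ ^ 2 / 2 * R ^ 2 + 1 / T * (T * (L / 2 * ((κ ^ 2 + κ) * R) ^ 2)) := by
        unfold energy
        gcongr
        exact hint
    _ = (κ ^ 2 / 2 + L / 2 * (κ ^ 2 + κ) ^ 2) * R ^ 2 := by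
        field_simp

namespace IsTrajectory

variable {L : ℝ≥0} {σ : ℝ → ℝ} {ω κ t₀ T t : ℝ} {w : ℝ → ℂ × ℂ}

theorem energy_decrease_of_le_norm_drift (hσ : IsStarFeedback L σ) (h : IsTrajectory σ ω κ t₀ w)
    (hκ : 0 < κ) (hT : (rot ω).Periodic T) (hT₀ : 0 < T)
    (hgain : 10 ^ 6 * ((1 + L) * (κ * T)) ≤ 1) (ht : t₀ ≤ t - 65 * T) {m : ℝ} (hm : 0 ≤ m)
    (hM : ∀ x ∈ Icc (t - 65 * T) t, |input σ ω κ w x| ≤ 5 * m) {j : ℕ} (hj : j < 64)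
    (hdrift : m * T / 16 ≤ ‖drift T w (t - j * T)‖) :
    energy σ ω κ T w t + κ * T / 512 * m ^ 2 ≤ energy σ ω κ T w (t - 64 * T) := by
  have hchain := h.energy_le_energy_sub_nat_mul hσ hκ hT hT₀ (t := t) (M := 5 * m) 64
    (by norm_num; linarith) (by norm_num; simpa using hM)
  have hsum : (m * T / 16) ^ 2 ≤ ∑ j ∈ Finset.range 64, ‖drift T w (t - j * T)‖ ^ 2 :=
    (by gcongr : (m * T / 16) ^ 2 ≤ ‖drift T w (t - j * T)‖ ^ 2).trans <|
      Finset.single_le_sum (f := fun j : ℕ => ‖drift T w (t - j * T)‖ ^ 2)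
        (fun _ _ => sq_nonneg _) (Finset.mem_range.2 hj)
  have hgood : κ * T / 256 * m ^ 2 ≤
      κ / T * ∑ j ∈ Finset.range 64, ‖drift T w (t - j * T)‖ ^ 2 :=
    calc κ * T / 256 * m ^ 2 = κ / T * (m * T / 16) ^ 2 := by
          field_simp
          ring
      _ ≤ _ := by gcongr
  have hbad : 64 * (κ ^ 2 * (1 + L / 2) * T ^ 2 * (5 * m) ^ 2) ≤ κ * T / 512 * m ^ 2 := by
    have hκT : 0 < κ * T := mul_pos hκ hT₀
    have : 64 * 25 * ((1 + L / 2) * (κ * T)) ≤ 1 / 512 := by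
      nlinarith [mul_nonneg L.coe_nonneg hκT.le]
    calc 64 * (κ ^ 2 * (1 + L / 2) * T ^ 2 * (5 * m) ^ 2)
        = 64 * 25 * ((1 + L / 2) * (κ * T)) * (κ * T * m ^ 2) := by ring
      _ ≤ 1 / 512 * (κ * T * m ^ 2) := by gcongr
      _ = κ * T / 512 * m ^ 2 := by ring
  push_cast at hchain
  linarith

theorem exists_energy_decrease (hσ : IsStarFeedback L σ) (h : IsTrajectory σ ω κ t₀ w)
    (hω : ω ≠ 0) (hκ : 0 < κ) (hT : (rot ω).Periodic T) (hT₀ : 0 < T)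
    (hgain : 10 ^ 6 * ((1 + L) * (κ * T)) ≤ 1) (ht : t₀ ≤ t - 65 * T) :
    ∃ r, ‖w t‖ ≤ amplitudeConst κ T * r ∧
      energy σ ω κ T w t + κ * T / 512 * σ r ^ 2 ≤ energy σ ω κ T w (t - 64 * T) := by
  -- With 64 periods, the amplitude varies by at most `r / 32` over one of them, the tolerance of
  -- `le_norm_drift`.
  obtain ⟨j, hj, s₀, hs₀, hamp, hslope⟩ := exists_window_norm_le (κ ^ 2 * (w t).1 + κ * (w t).2)
    ((κ : ℂ) ^ 2 * (w t).2) t hT₀.le (N := 64) (by norm_num)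
  rw [← freeAmplitude] at hamp hslope
  push_cast at hslope
  set r := ‖freeAmplitude κ w t s₀‖
  have hr : 0 ≤ r := norm_nonneg _
  refine ⟨r, norm_le_amplitudeConst_mul hκ hT₀ hamp hslope, ?_⟩
  have hκT : 0 < κ * T := mul_pos hκ hT₀
  have hLκT : 0 ≤ L * (κ * T) := mul_nonneg L.coe_nonneg hκT.le
  have hp (s : ℝ) (hs : s ∈ Icc (t - 65 * T) t) : ‖freeAmplitude κ w t s‖ ≤ 4 * r := by
    have hdist := norm_freeAmplitude_sub_le κ w t (s := s) (s' := t) (d := 65 * T)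
      (abs_le.2 ⟨by linarith [hs.1], by linarith [hs.2]⟩)
    rw [freeAmplitude_self] at hdist
    linarith [norm_le_norm_add_norm_sub' (freeAmplitude κ w t s)
      (κ ^ 2 * (w t).1 + κ * (w t).2 : ℂ)]
  have hinput := fun s hs => h.input_bounds_of_norm_freeAmplitude_le hσ hκ.le (d := 65 * T)
    (by linarith) (by nlinarith) ht hr hp (s := s) hs
  have hj' : (j : ℝ) * T ≤ 63 * T := by
    gcongr
    exact_mod_cast Nat.le_of_lt_succ hj
  have hj₀ : 0 ≤ (j : ℝ) * T := by positivity
  refine h.energy_decrease_of_le_norm_drift hσ hκ hT hT₀ hgain ht (hσ.nonneg hr)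
    (fun x hx => (hinput x hx).1) hj
    (h.le_norm_drift hσ hω hT hT₀ (by linarith) (fun s hs => ?_)
      fun s hs => (hinput s ⟨by linarith [hs.1], by linarith [hs.2]⟩).2)
  rw [← Complex.sub_re, ← mul_sub]
  have hdist := norm_freeAmplitude_sub_le κ w t (s := s) (s' := s₀) (d := T)
    (abs_le.2 ⟨by linarith [hs.1, hs₀.2], by linarith [hs.2, hs₀.1]⟩)
  exact (abs_re_rot_mul_le _ _ _).trans (hdist.trans (by linarith))

theorem energy_add_le_energy_sub (hσ : IsStarFeedback L σ) (h : IsTrajectory σ ω κ t₀ w)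
    (hω : ω ≠ 0) (hκ : 0 < κ) (hT : (rot ω).Periodic T) (hT₀ : 0 < T)
    (hgain : 10 ^ 6 * ((1 + L) * (κ * T)) ≤ 1) (ht : t₀ ≤ t - 65 * T) :
    energy σ ω κ T w t + κ * T / 512 * σ (‖w t‖ / amplitudeConst κ T) ^ 2 ≤
      energy σ ω κ T w (t - 64 * T) := by
  obtain ⟨r, hr, hdec⟩ := h.exists_energy_decrease hσ hω hκ hT hT₀ hgain ht
  have hC := amplitudeConst_pos hκ hT₀
  refine le_trans ?_ hdec
  gcongr
  · exact hσ.nonneg (by positivity)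
  · exact hσ.monotone ((div_le_iff₀' hC).2 hr)

theorem norm_le_exp_mul (hσ : IsStarFeedback L σ) (h : IsTrajectory σ ω κ t₀ w) (hκ : 0 ≤ κ)
    (ht : t₀ ≤ t) : ‖w t‖ ≤ exp ((1 + L * (κ ^ 2 + κ)) * (t - t₀)) * ‖w t₀‖ := by
  have hgrowth := norm_le_gronwallBound_of_norm_deriv_right_le (ε := 0)
    (K := 1 + L * (κ ^ 2 + κ)) h.continuous.continuousOn
    (fun s hs => (h.hasDerivWithinAt s hs.1).mono (Ici_subset_Ici.2 hs.1)) le_rfl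
    (fun s _ => ?_) t (right_mem_Icc.2 ht)
  · rwa [gronwallBound_ε0, mul_comm] at hgrowth
  have hinput : |input σ ω κ w s| ≤ L * ((κ ^ 2 + κ) * ‖w s‖) :=
    (hσ.abs_apply_le _).trans (by gcongr; exact abs_output_le hκ ω w s)
  rw [add_zero, norm_prod_le_iff]
  have : 0 ≤ L * ((κ ^ 2 + κ) * ‖w s‖) := by positivity
  refine ⟨by linarith [norm_snd_le (w s)], ?_⟩
  rw [norm_neg, norm_mul, RCLike.norm_conj, norm_rot, mul_one, Complex.norm_real, Real.norm_eq_abs]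
  linarith [norm_nonneg (w s)]

theorem norm_le_exp_mul_of_mem (hσ : IsStarFeedback L σ) (h : IsTrajectory σ ω κ t₀ w)
    (hκ : 0 ≤ κ) {H : ℝ} (ht : t ∈ Icc t₀ (t₀ + H)) :
    ‖w t‖ ≤ exp ((1 + L * (κ ^ 2 + κ)) * H) * ‖w t₀‖ := by
  refine (h.norm_le_exp_mul hσ hκ ht.1).trans ?_
  gcongr
  linarith [ht.2]

end IsTrajectory

/-! ### Delayed Lyapunov functionals -/

/-- `V` is a Lyapunov functional for the curves `w` with `P t₀ w`, which is read "`w` is a solution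
from time `t₀` on": after a transient of length `H`, its value decreases over each delay `h` by at
least `α ‖w t‖`. The constants `G` and `F` control `w` and `V` during the transient. -/
structure DelayedLyapunov {E : Type*} [NormedAddCommGroup E] (P : ℝ → (ℝ → E) → Prop)
    (V : (ℝ → E) → ℝ → ℝ) (α : ℝ → ℝ) (h H G F : ℝ) : Prop where
  delay_pos : 0 < h
  growth_nonneg : 0 ≤ G
  value_nonneg : 0 ≤ F
  rate_zero : α 0 = 0
  rate_pos : ∀ r, 0 < r → 0 < α r
  rate_monotoneOn : MonotoneOn α (Ici 0)
  nonneg : ∀ w t, 0 ≤ V w t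
  restrict : ∀ {t₀ t₁ w}, P t₀ w → t₀ ≤ t₁ → P t₁ w
  growth : ∀ {t₀ t w}, P t₀ w → t ∈ Icc t₀ (t₀ + H) → ‖w t‖ ≤ G * ‖w t₀‖
  value_le : ∀ {t₀ t w}, P t₀ w → t ∈ Icc (t₀ + H - h) (t₀ + H) → V w t ≤ F * ‖w t₀‖ ^ 2
  decrease : ∀ {t₀ t w}, P t₀ w → t₀ + H ≤ t → V w t + α ‖w t‖ ≤ V w (t - h)

namespace DelayedLyapunov

variable {E : Type*} [NormedAddCommGroup E] {P : ℝ → (ℝ → E) → Prop} {V : (ℝ → E) → ℝ → ℝ}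
  {α : ℝ → ℝ} {h H G F t₀ t : ℝ} {w : ℝ → E}

theorem rate_nonneg (hV : DelayedLyapunov P V α h H G F) {r : ℝ} (hr : 0 ≤ r) : 0 ≤ α r :=
  hV.rate_zero ▸ hV.rate_monotoneOn self_mem_Ici hr hr

theorem value_le_of_le (hV : DelayedLyapunov P V α h H G F) (hw : P t₀ w)
    (ht : t₀ + H - h ≤ t) : V w t ≤ F * ‖w t₀‖ ^ 2 := by
  have hstep (n : ℕ) : ∀ t, t₀ + H - h ≤ t → t ≤ t₀ + H + n * h → V w t ≤ F * ‖w t₀‖ ^ 2 := by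
    induction n with
    | zero => exact fun t ht ht' => hV.value_le hw ⟨ht, by simpa using ht'⟩
    | succ n ih =>
      intro t ht ht'
      push_cast at ht'
      rcases le_total t (t₀ + H) with hle | hle
      · exact hV.value_le hw ⟨ht, hle⟩
      · have := ih (t - h) (by linarith) (by linarith)
        linarith [hV.decrease hw hle, hV.rate_nonneg (norm_nonneg (w t))]
  obtain ⟨n, hn⟩ := Archimedean.arch (t - (t₀ + H)) hV.delay_pos
  exact hstep n t ht (by rw [nsmul_eq_mul] at hn; linarith)

theorem stable (hV : DelayedLyapunov P V α h H G F) {δ : ℝ} (hδ : 0 < δ) :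
    ∃ η > 0, ∀ t₀ w, P t₀ w → ‖w t₀‖ ≤ η → ∀ t, t₀ ≤ t → ‖w t‖ ≤ δ := by
  have hsmall : ∀ᶠ η in 𝓝[>] (0 : ℝ), G * η < δ ∧ F * η ^ 2 < α δ := by
    refine nhdsWithin_le_nhds (Eventually.and ?_ ?_)
    · exact (by fun_prop : Continuous fun η : ℝ => G * η).continuousAt.eventually_lt_const
        (by simpa using hδ)
    · exact (by fun_prop : Continuous fun η : ℝ => F * η ^ 2).continuousAt.eventually_lt_const
        (by simpa using hV.rate_pos δ hδ)
  obtain ⟨η, ⟨hGη, hFη⟩, hη⟩ := (hsmall.and self_mem_nhdsWithin).exists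
  refine ⟨η, hη, fun t₀ w hw hw₀ t ht => ?_⟩
  rcases le_total t (t₀ + H) with hle | hle
  · exact (hV.growth hw ⟨ht, hle⟩).trans
      ((mul_le_mul_of_nonneg_left hw₀ hV.growth_nonneg).trans hGη.le)
  · by_contra! hlarge
    have hvalue := hV.value_le_of_le hw (t := t - h) (by linarith)
    have hrate : α δ ≤ α ‖w t‖ := hV.rate_monotoneOn hδ.le (norm_nonneg _) hlarge.le
    have hF : F * ‖w t₀‖ ^ 2 ≤ F * η ^ 2 := by
      have := hV.value_nonneg
      gcongr
    linarith [hV.decrease hw hle, hV.nonneg w t]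

theorem exists_norm_le (hV : DelayedLyapunov P V α h H G F) (hw : P t₀ w) {η : ℝ} (hη : 0 < η) :
    ∃ t, t₀ ≤ t ∧ ‖w t‖ ≤ η := by
  by_contra! hlarge
  have hdescent (n : ℕ) : V w (t₀ + |H| + n * h) + n * α η ≤ V w (t₀ + |H|) := by
    induction n with
    | zero => simp
    | succ n ih =>
      have hnh : 0 ≤ (n + 1) * h := mul_nonneg (by positivity) hV.delay_pos.le
      have hrate := hV.rate_monotoneOn hη.le (norm_nonneg _)
        (hlarge (t₀ + |H| + (n + 1) * h) (by linarith [abs_nonneg H])).le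
      have := hV.decrease hw (t := t₀ + |H| + (n + 1) * h) (by linarith [le_abs_self H])
      rw [show t₀ + |H| + (n + 1) * h - h = t₀ + |H| + n * h by ring] at this
      push_cast
      linarith
  obtain ⟨n, hn⟩ := exists_lt_nsmul (hV.rate_pos η hη) (V w (t₀ + |H|))
  rw [nsmul_eq_mul] at hn
  linarith [hdescent n, hV.nonneg w (t₀ + |H| + n * h)]

theorem tendsto_zero (hV : DelayedLyapunov P V α h H G F) (hw : P t₀ w) :
    Tendsto w atTop (𝓝 0) := by
  refine NormedAddGroup.tendsto_nhds_zero.2 fun ε hε => ?_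
  obtain ⟨η, hη, hstable⟩ := hV.stable (half_pos hε)
  obtain ⟨t₁, ht₁, hsmall⟩ := hV.exists_norm_le hw hη
  filter_upwards [eventually_ge_atTop t₁] with t ht
  exact (hstable t₁ w (hV.restrict hw ht₁) hsmall t ht).trans_lt (half_lt_self hε)

end DelayedLyapunov

theorem IsTrajectory.delayedLyapunov {L : ℝ≥0} {σ : ℝ → ℝ} {ω κ T : ℝ} (hσ : IsStarFeedback L σ)
    (hω : ω ≠ 0) (hκ : 0 < κ) (hT : (rot ω).Periodic T) (hT₀ : 0 < T)
    (hgain : 10 ^ 6 * ((1 + L) * (κ * T)) ≤ 1) :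
    DelayedLyapunov (IsTrajectory σ ω κ) (energy σ ω κ T)
      (fun r => κ * T / 512 * σ (r / amplitudeConst κ T) ^ 2) (64 * T) (65 * T)
      (exp ((1 + L * (κ ^ 2 + κ)) * (65 * T)))
      ((κ ^ 2 / 2 + L / 2 * (κ ^ 2 + κ) ^ 2) * exp ((1 + L * (κ ^ 2 + κ)) * (65 * T)) ^ 2) where
  delay_pos := by positivity
  growth_nonneg := (exp_pos _).le
  value_nonneg := by positivity
  rate_zero := by simp only [zero_div, hσ.map_zero, zero_pow two_ne_zero, mul_zero]
  rate_pos r hr := by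
    have := hσ.pos _ (div_pos hr (amplitudeConst_pos hκ hT₀))
    positivity
  rate_monotoneOn r hr r' _ hrr' := by
    have hC := amplitudeConst_pos hκ hT₀
    have := hσ.nonneg (div_nonneg (mem_Ici.1 hr) hC.le)
    have := hσ.monotone (div_le_div_of_nonneg_right hrr' hC.le)
    dsimp only
    gcongr
  nonneg := energy_nonneg hσ ω κ hT₀
  restrict h ht := h.mono ht
  growth h ht := h.norm_le_exp_mul_of_mem hσ hκ.le ht
  value_le h ht := by
    rw [mul_assoc, ← mul_pow]
    exact energy_le_mul_sq hσ ω hκ.le hT₀ h.continuous fun s hs =>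
      h.norm_le_exp_mul_of_mem hσ hκ.le ⟨by linarith [hs.1, ht.1], hs.2.trans ht.2⟩
  decrease h ht := h.energy_add_le_energy_sub hσ hω hκ hT hT₀ hgain (by linarith)

/-! ### Reduction to rotating coordinates -/

theorem Controllable.eq_top_of_invariant {A : Matrix (Fin 4) (Fin 4) ℝ} {b : Fin 4 → ℝ}
    (h : Controllable A b) {p : Submodule ℝ (Fin 4 → ℝ)} (hb : b ∈ p)
    (hA : ∀ v ∈ p, A.mulVec v ∈ p) : p = ⊤ := by
  refine top_unique (h.symm.trans_le (Submodule.span_le.2 ?_))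
  simp only [← Matrix.mulVec_mulVec]
  rintro v (rfl | rfl | rfl | rfl)
  exacts [hb, hA _ hb, hA _ (hA _ hb), hA _ (hA _ (hA _ hb))]

theorem J2mat_mulVec (ω : ℝ) (x : Fin 4 → ℝ) :
    (J2mat ω).mulVec x = ![-ω * x 1 + x 2, ω * x 0 + x 3, -ω * x 3, ω * x 2] := by
  ext i
  fin_cases i <;> simp [J2mat, Matrix.mulVec, dotProduct, Fin.sum_univ_four]

theorem Controllable.mk_ne_zero {ω : ℝ} {b : Fin 4 → ℝ} (h : Controllable (J2mat ω) b) :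
    (⟨b 2, b 3⟩ : ℂ) ≠ 0 := by
  intro hb
  have htop := h.eq_top_of_invariant
    (p := LinearMap.ker (LinearMap.proj (R := ℝ) (φ := fun _ : Fin 4 => ℝ) 2)
      ⊓ LinearMap.ker (LinearMap.proj (R := ℝ) (φ := fun _ : Fin 4 => ℝ) 3))
    ⟨congrArg Complex.re hb, congrArg Complex.im hb⟩ fun v hv => by
      obtain ⟨hv₂ : v 2 = 0, hv₃ : v 3 = 0⟩ := hv
      simp [J2mat_mulVec, hv₂, hv₃]
  have hsingle : Pi.single 2 1 ∈ (⊤ : Submodule ℝ (Fin 4 → ℝ)) := Submodule.mem_top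
  rw [← htop] at hsingle
  simpa using hsingle.1

theorem Controllable.ne_zero {ω : ℝ} {b : Fin 4 → ℝ} (h : Controllable (J2mat ω) b) : ω ≠ 0 := by
  rintro rfl
  let f : (Fin 4 → ℝ) →ₗ[ℝ] ℝ := b 3 • LinearMap.proj 2 - b 2 • LinearMap.proj 3
  have htop : LinearMap.ker f = ⊤ := h.eq_top_of_invariant
    (show b 3 * b 2 - b 2 * b 3 = 0 by ring) fun v _ => by simp [f, J2mat_mulVec]
  have hf (v : Fin 4 → ℝ) : b 3 * v 2 - b 2 * v 3 = 0 := by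
    have hv : v ∈ LinearMap.ker f := htop ▸ Submodule.mem_top
    exact hv
  refine h.mk_ne_zero (Complex.ext ?_ ?_)
  · simpa using hf (Pi.single 3 1)
  · simpa using hf (Pi.single 2 1)

/-- Complex coordinates in which, for `β₁ = b₁` and `β₂ = b₂` read as complex numbers, `J₂(ω)`
becomes `(z₁, z₂) ↦ (iωz₁ + z₂, iωz₂)` and `b` becomes `(0, 1)`. -/
def normalCoordinates (β₁ : ℂ) {β₂ : ℂ} (hβ : β₂ ≠ 0) : (Fin 4 → ℝ) ≃L[ℝ] ℂ × ℂ :=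
  LinearEquiv.toContinuousLinearEquiv
    { toFun x := ((⟨x 0, x 1⟩ - β₁ * (⟨x 2, x 3⟩ / β₂)) / β₂, ⟨x 2, x 3⟩ / β₂)
      invFun z := ![(β₂ * z.1 + β₁ * z.2).re, (β₂ * z.1 + β₁ * z.2).im,
        (β₂ * z.2).re, (β₂ * z.2).im]
      map_add' x y := by
        have hadd (a b c d : ℝ) : (⟨a + c, b + d⟩ : ℂ) = ⟨a, b⟩ + ⟨c, d⟩ := rfl
        simp only [Pi.add_apply, hadd, Prod.mk_add_mk]
        congr 1 <;> ring
      map_smul' c x := by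
        have hsmul (a b : ℝ) : (⟨c * a, c * b⟩ : ℂ) = c * ⟨a, b⟩ := by
          apply Complex.ext <;> simp
        simp only [Pi.smul_apply, smul_eq_mul, hsmul, RingHom.id_apply, Prod.smul_mk,
          Complex.real_smul]
        congr 1 <;> ring
      left_inv x := by
        ext i
        fin_cases i <;> simp [mul_div_cancel₀ _ hβ]
      right_inv z := by
        simp only [Matrix.cons_val, Complex.eta, mul_div_cancel_left₀ _ hβ,
          add_sub_cancel_right] }

theorem normalCoordinates_apply (β₁ : ℂ) {β₂ : ℂ} (hβ : β₂ ≠ 0) (x : Fin 4 → ℝ) :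
    normalCoordinates β₁ hβ x =
      ((⟨x 0, x 1⟩ - β₁ * (⟨x 2, x 3⟩ / β₂)) / β₂, ⟨x 2, x 3⟩ / β₂) := rfl

theorem normalCoordinates_input {b : Fin 4 → ℝ} (hb : (⟨b 2, b 3⟩ : ℂ) ≠ 0) :
    normalCoordinates ⟨b 0, b 1⟩ hb b = (0, 1) := by
  rw [normalCoordinates_apply, div_self hb, mul_one, sub_self, zero_div]

theorem normalCoordinates_J2mat_mulVec (ω : ℝ) (β₁ : ℂ) {β₂ : ℂ} (hβ : β₂ ≠ 0) (x : Fin 4 → ℝ) :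
    normalCoordinates β₁ hβ ((J2mat ω).mulVec x) =
      (ω * Complex.I) • normalCoordinates β₁ hβ x + ((normalCoordinates β₁ hβ x).2, 0) := by
  have h₁ : (⟨-ω * x 1 + x 2, ω * x 0 + x 3⟩ : ℂ) =
      ω * Complex.I * ⟨x 0, x 1⟩ + ⟨x 2, x 3⟩ := by
    apply Complex.ext <;> simp
  have h₂ : (⟨-ω * x 3, ω * x 2⟩ : ℂ) = ω * Complex.I * ⟨x 2, x 3⟩ := by
    apply Complex.ext <;> simp
  simp only [normalCoordinates_apply, J2mat_mulVec, Matrix.cons_val, h₁, h₂, Prod.smul_mk,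
    smul_eq_mul, Prod.mk_add_mk, add_zero]
  congr 1 <;> ring

theorem exists_sum_mul_eq_re {ι : Type*} [Fintype ι] (Φ : (ι → ℝ) →ₗ[ℝ] ℂ × ℂ) (κ : ℝ) :
    ∃ K : ι → ℝ, ∀ x, ∑ i, K i * x i = (κ ^ 2 * (Φ x).1 + κ * (Φ x).2 : ℂ).re := by
  classical
  let ℓ : Module.Dual ℝ (ι → ℝ) :=
    Complex.reLm ∘ₗ (κ ^ 2 • LinearMap.fst ℝ ℂ ℂ + κ • LinearMap.snd ℝ ℂ ℂ) ∘ₗ Φ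
  refine ⟨(dotProductEquiv ℝ ι).symm ℓ, fun x => ?_⟩
  have hℓ : dotProductEquiv ℝ ι ((dotProductEquiv ℝ ι).symm ℓ) x = ℓ x := by
    rw [LinearEquiv.apply_symm_apply]
  refine hℓ.trans ?_
  simp [ℓ, ← Complex.ofReal_pow]

theorem isTrajectory_conj_rot_smul {σ : ℝ → ℝ} {ω κ t₀ : ℝ} {z : ℝ → ℂ × ℂ}
    (hz : ∀ t, t₀ ≤ t → HasDerivAt z ((ω * Complex.I) • z t + ((z t).2, 0)
      - σ (κ ^ 2 * (z t).1 + κ * (z t).2 : ℂ).re • (0, 1)) t) :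
    IsTrajectory σ ω κ t₀ fun t => conj (rot ω t) • z (max t t₀) where
  continuous := by
    have hcont : ContinuousOn z (Ici t₀) := fun t ht => (hz t ht).continuousAt.continuousWithinAt
    have hcomp : Continuous fun t => z (max t t₀) :=
      hcont.comp_continuous (by fun_prop) fun t => le_max_right t t₀
    exact (Complex.continuous_conj.comp (continuous_rot ω)).smul hcomp
  hasDerivWithinAt t ht := by
    have hphase : HasDerivAt (fun s => conj (rot ω s)) (-(ω * Complex.I) * conj (rot ω t)) t := by
      refine (hasDerivAt_rot ω t).star.congr_deriv ?_
      simp [mul_comm]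
    have hext : HasDerivWithinAt (fun s => z (max s t₀)) _ (Ici t₀) t :=
      (hz t ht).hasDerivWithinAt.congr (fun s hs => by rw [max_eq_left (mem_Ici.1 hs)])
        (by rw [max_eq_left ht])
    have hinput : input σ ω κ (fun s => conj (rot ω s) • z (max s t₀)) t =
        σ (κ ^ 2 * (z t).1 + κ * (z t).2 : ℂ).re := by
      rw [input, output, max_eq_left ht]
      congr 2
      simp only [Prod.smul_fst, Prod.smul_snd, smul_eq_mul]
      linear_combination (κ ^ 2 * (z t).1 + κ * (z t).2) * rot_mul_conj_rot ω t
    refine (hphase.hasDerivWithinAt.smul hext).congr_deriv ?_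
    rw [hinput, max_eq_left ht]
    ext1 <;> simp <;> ring

theorem DelayedLyapunov.isGAS {E : Type*} [NormedAddCommGroup E] [NormedSpace ℝ E]
    {P : ℝ → (ℝ → E) → Prop} {V : (ℝ → E) → ℝ → ℝ} {α : ℝ → ℝ} {h H G F : ℝ}
    (hV : DelayedLyapunov P V α h H G F) (Φ : (Fin 4 → ℝ) ≃L[ℝ] E)
    {f : ℝ → (Fin 4 → ℝ) → Fin 4 → ℝ}
    (hlift : ∀ t₀ x, (∀ t, t₀ ≤ t → HasDerivAt x (f t (x t)) t) →
      ∃ w, P t₀ w ∧ ∀ t, t₀ ≤ t → ‖w t‖ = ‖Φ (x t)‖) : IsGAS f := by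
  have hsymm (x : Fin 4 → ℝ) : ‖x‖ ≤ (‖(Φ.symm : E →L[ℝ] Fin 4 → ℝ)‖ + 1) * ‖Φ x‖ := by
    have := (Φ.symm : E →L[ℝ] Fin 4 → ℝ).le_opNorm (Φ x)
    rw [ContinuousLinearEquiv.coe_coe, Φ.symm_apply_apply] at this
    linarith [norm_nonneg (Φ x)]
  have hpos : 0 < ‖(Φ.symm : E →L[ℝ] Fin 4 → ℝ)‖ + 1 := by positivity
  refine ⟨fun δ hδ => ?_, fun t₀ _ x hx => ?_⟩
  · obtain ⟨η, hη, hstable⟩ := hV.stable (div_pos hδ hpos)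
    have hpos' : 0 < ‖(Φ : (Fin 4 → ℝ) →L[ℝ] E)‖ + 1 := by positivity
    refine ⟨η / (‖(Φ : (Fin 4 → ℝ) →L[ℝ] E)‖ + 1), div_pos hη hpos', fun t₀ _ x hx hx₀ t ht => ?_⟩
    obtain ⟨w, hw, hnorm⟩ := hlift t₀ x hx
    have hw₀ : ‖w t₀‖ ≤ η := by
      rw [hnorm t₀ le_rfl]
      refine ((Φ : (Fin 4 → ℝ) →L[ℝ] E).le_opNorm (x t₀)).trans ?_
      rw [le_div_iff₀' hpos'] at hx₀
      linarith [norm_nonneg (x t₀)]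
    have hwt := hstable t₀ w hw hw₀ t ht
    rw [hnorm t ht, le_div_iff₀' hpos] at hwt
    exact (hsymm _).trans hwt
  · obtain ⟨w, hw, hnorm⟩ := hlift t₀ x hx
    have hlim : Tendsto (fun t => Φ (x t)) atTop (𝓝 0) := by
      rw [tendsto_zero_iff_norm_tendsto_zero]
      refine (hV.tendsto_zero hw).norm.congr' ?_ |>.trans (by rw [norm_zero])
      filter_upwards [eventually_ge_atTop t₀] with t ht using hnorm t ht
    simpa only [Function.comp_def, Φ.symm_apply_apply, map_zero] using
      (Φ.symm.continuous.tendsto 0).comp hlim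

theorem stmt0_general {L : ℝ≥0} {σ : ℝ → ℝ} (hσ : IsStarFeedback L σ) (ω : ℝ) (b : Fin 4 → ℝ)
    (hctrl : Controllable (J2mat ω) b) :
    ∃ K : Fin 4 → ℝ, IsGAS (fun _ x => (J2mat ω).mulVec x - σ (∑ i, K i * x i) • b) := by
  have hω := hctrl.ne_zero
  have hb := hctrl.mk_ne_zero
  obtain ⟨κ, hκ, hgain⟩ : ∃ κ > 0, 10 ^ 6 * ((1 + L) * (κ * (2 * π / |ω|))) ≤ 1 :=
    ⟨1 / (10 ^ 6 * (1 + L) * (2 * π / |ω|)), by positivity, by field_simp; rfl⟩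
  let Φ := normalCoordinates ⟨b 0, b 1⟩ hb
  obtain ⟨K, hK⟩ := exists_sum_mul_eq_re Φ.toLinearEquiv.toLinearMap κ
  refine ⟨K, (IsTrajectory.delayedLyapunov hσ hω hκ (rot_periodic hω) (by positivity)
    hgain).isGAS Φ fun t₀ x hx => ⟨_, isTrajectory_conj_rot_smul (z := Φ ∘ x) fun t ht => ?_,
    fun t ht => ?_⟩⟩
  · refine (Φ.hasFDerivAt.comp_hasDerivAt t (hx t ht)).congr_deriv ?_
    simp only [hK, Φ, ContinuousLinearEquiv.coe_coe, map_sub, map_smul,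
      normalCoordinates_J2mat_mulVec, normalCoordinates_input, Function.comp_apply]
    rfl
  · rw [norm_smul, RCLike.norm_conj, norm_rot, one_mul, max_eq_left ht, Function.comp_apply]

/-- The saturated complex double integrator `ẋ = J₂(ω)x - b σ(Kᵀx)` with `(J₂(ω), b)`
controllable admits a stabilizing linear feedback. -/
theorem stmt0 (ω : ℝ) (hω : 0 < ω) (b : Fin 4 → ℝ) (hctrl : Controllable (J2mat ω) b)
    (σ : ℝ → ℝ) (hσ : IsSaturation σ) :
    ∃ K : Fin 4 → ℝ,
      IsGAS (fun _ x => (J2mat ω).mulVec x - σ (∑ i, K i * x i) • b) := by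
  obtain ⟨L, hσ'⟩ := hσ.exists_isStarFeedback
  exact stmt0_general hσ' ω b hctrl
end
end

section
/- Let ω>0 and b∈ℝ⁴ be such that the pair (J₂(ω),b) is controllable. Then there exists an invertible matrix P∈M₄(ℝ) such that (2π/ω)·P·J₂(ω)·P⁻¹ = J₂(2π) and P·b = (0,0,0,1)ᵀ. -/
open Real Filter

noncomputable section

/-!
If `b` and `c` are both cyclic vectors of `A`, then `c = q(A) b` for some polynomial `q`. The matrix
`q(A)` commutes with `A`, and it is invertible because its image contains every `p(A) c`. So as soon
as two matrices with cyclic vectors are similar, the similarity can be corrected to carry one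
cyclic vector to the other. Here `diag(1, 1, k, k)` conjugates `k J₂(ω)` to `J₂(kω)`.
-/

open Matrix Polynomial

theorem semiconjBy_aeval {R S : Type*} [CommSemiring R] [Semiring S] [Algebra R S] {a x y : S}
    (h : SemiconjBy a x y) (p : R[X]) : SemiconjBy a (aeval x p) (aeval y p) := by
  induction p using Polynomial.induction_on' with
  | add p q hp hq => simpa only [map_add] using hp.add_right hq
  | monomial i r =>
    simpa only [aeval_monomial] using
      SemiconjBy.mul_right (Algebra.commutes r a).symm (h.pow_right i)

section CyclicVector

variable {n R : Type*} [Fintype n] [DecidableEq n] [CommRing R]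
  {A B D : Matrix n n R} {b c : n → R}

/-- `b` is a cyclic vector of `A`: it generates `n → R` as a module over `R[X]`, with `X` acting
as `A`. This is controllability of the pair `(A, b)` in dimension-free form, with no bound on the
powers of `A` that occur. -/
def IsCyclicVector (A : Matrix n n R) (b : n → R) : Prop :=
  ∀ v, ∃ p : R[X], aeval A p *ᵥ b = v

namespace IsCyclicVector

protected theorem smul (hb : IsCyclicVector A b) {k : R} (hk : IsUnit k) :
    IsCyclicVector (k • A) b := by
  obtain ⟨k, rfl⟩ := hk
  intro v
  obtain ⟨p, hp⟩ := hb v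
  refine ⟨p.comp ((↑k⁻¹ : R) • X), ?_⟩
  rwa [aeval_comp, map_smul, aeval_X, smul_smul, Units.inv_mul, one_smul]

theorem mulVec_of_semiconjBy (hb : IsCyclicVector A b) (hD : IsUnit D) (h : SemiconjBy D A B) :
    IsCyclicVector B (D *ᵥ b) := by
  intro v
  obtain ⟨w, rfl⟩ := mulVec_surjective_iff_isUnit.mpr hD v
  obtain ⟨p, rfl⟩ := hb w
  exact ⟨p, by rw [mulVec_mulVec, mulVec_mulVec, (semiconjBy_aeval h p).eq]⟩

theorem exists_isUnit_commute (hb : IsCyclicVector A b) (hc : IsCyclicVector A c) :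
    ∃ Q : Matrix n n R, IsUnit Q ∧ Commute Q A ∧ Q *ᵥ b = c := by
  obtain ⟨q, hq⟩ := hb c
  refine ⟨aeval A q, mulVec_surjective_iff_isUnit.mp fun v => ?_, ?_, hq⟩
  · obtain ⟨p, rfl⟩ := hc v
    exact ⟨aeval A p *ᵥ b, by
      rw [← hq, mulVec_mulVec, mulVec_mulVec, (Commute.all q p |>.map (aeval A)).eq]⟩
  · simpa only [aeval_X] using (Commute.all q X).map (aeval A)

theorem exists_isUnit_semiconjBy (hb : IsCyclicVector A b) (hc : IsCyclicVector B c)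
    (hD : IsUnit D) (h : SemiconjBy D A B) :
    ∃ P : Matrix n n R, IsUnit P ∧ SemiconjBy P A B ∧ P *ᵥ b = c := by
  obtain ⟨Q, hQ, hQB, hQc⟩ := (hb.mulVec_of_semiconjBy hD h).exists_isUnit_commute hc
  exact ⟨Q * D, hQ.mul hD, SemiconjBy.mul_left hQB h, by rwa [← mulVec_mulVec]⟩

end IsCyclicVector

end CyclicVector

theorem Controllable.isCyclicVector {A : Matrix (Fin 4) (Fin 4) ℝ} {b : Fin 4 → ℝ}
    (h : Controllable A b) : IsCyclicVector A b := by
  intro v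
  have hv : v ∈ Submodule.span ℝ {b, A *ᵥ b, (A * A) *ᵥ b, (A * A * A) *ᵥ b} :=
    h ▸ Submodule.mem_top
  simp only [Submodule.mem_span_insert, Submodule.mem_span_singleton] at hv
  obtain ⟨r₀, _, ⟨r₁, _, ⟨r₂, _, ⟨r₃, rfl⟩, rfl⟩, rfl⟩, rfl⟩ := hv
  refine ⟨r₀ • 1 + (r₁ • X + (r₂ • (X * X) + r₃ • (X * X * X))), ?_⟩
  simp only [map_add, map_smul, map_mul, map_one, aeval_X, add_mulVec, smul_mulVec, one_mulVec]

theorem controllable_J2mat_e4 {ω : ℝ} (hω : ω ≠ 0) : Controllable (J2mat ω) ![0, 0, 0, 1] := by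
  have h₁ : J2mat ω *ᵥ ![0, 0, 0, 1] = ![0, 1, -ω, 0] := by
    ext i; fin_cases i <;> simp [J2mat]
  have h₂ : (J2mat ω * J2mat ω) *ᵥ ![0, 0, 0, 1] = ![-2 * ω, 0, 0, -ω ^ 2] := by
    rw [← mulVec_mulVec, h₁]
    ext i; fin_cases i <;> simp [J2mat] <;> ring
  have h₃ : (J2mat ω * J2mat ω * J2mat ω) *ᵥ ![0, 0, 0, 1] = ![0, -3 * ω ^ 2, ω ^ 3, 0] := by
    rw [Matrix.mul_assoc, ← mulVec_mulVec, h₂]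
    ext i; fin_cases i <;> simp [J2mat] <;> ring
  rw [Controllable, h₁, h₂, h₃, eq_top_iff]
  intro v _
  simp only [Submodule.mem_span_insert, Submodule.mem_span_singleton]
  -- With `A = J2mat ω`, the coefficients come from `A²e₄ + ω²e₄ = -2ω e₁` and
  -- `A³e₄ + ω²Ae₄ = -2ω² e₂`, together with `Ae₄ = e₂ - ω e₃`.
  refine ⟨v 3 - ω * v 0 / 2, _, ⟨-(v 1 / 2) - 3 * v 2 / (2 * ω), _, ⟨-(v 0 / (2 * ω)), _,
    ⟨-(v 1 / (2 * ω ^ 2)) - v 2 / (2 * ω ^ 3), rfl⟩, rfl⟩, rfl⟩, ?_⟩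
  ext i
  fin_cases i <;> simp <;> field_simp <;> ring

theorem semiconjBy_smul_J2mat (k ω : ℝ) :
    SemiconjBy (diagonal ![1, 1, k, k]) (k • J2mat ω) (J2mat (k * ω)) := by
  ext i j
  fin_cases i <;> fin_cases j <;> simp [J2mat, diagonal_mul, mul_diagonal] <;> ring

theorem stmt1_general {k ω : ℝ} (hk : k ≠ 0) {b c : Fin 4 → ℝ}
    (hb : Controllable (J2mat ω) b) (hc : Controllable (J2mat (k * ω)) c) :
    ∃ P : Matrix (Fin 4) (Fin 4) ℝ, IsUnit P.det ∧
      k • (P * J2mat ω * P⁻¹) = J2mat (k * ω) ∧ P *ᵥ b = c := by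
  have hD : IsUnit (diagonal ![1, 1, k, k]) := by
    simp [isUnit_diagonal, Pi.isUnit_iff, Fin.forall_fin_succ, hk]
  obtain ⟨P, hP, hPJ, hPb⟩ := (hb.isCyclicVector.smul hk.isUnit).exists_isUnit_semiconjBy
    hc.isCyclicVector hD (semiconjBy_smul_J2mat k ω)
  rw [isUnit_iff_isUnit_det] at hP
  refine ⟨P, hP, ?_, hPb⟩
  rw [← Matrix.smul_mul, ← Matrix.mul_smul, hPJ.eq, mul_nonsing_inv_cancel_right _ _ hP]

/-- Normal form: a controllable pair `(J₂(ω), b)` can be brought, by an invertible change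
of variable and time rescaling, to `(J₂(2π), e₄)`. -/
theorem stmt1 (ω : ℝ) (hω : 0 < ω) (b : Fin 4 → ℝ) (hctrl : Controllable (J2mat ω) b) :
    ∃ P : Matrix (Fin 4) (Fin 4) ℝ, IsUnit P.det ∧
      (2 * Real.pi / ω) • (P * J2mat ω * P⁻¹) = J2mat (2 * Real.pi) ∧
      P.mulVec b = ![0, 0, 0, 1] := by
  have hk : 2 * Real.pi / ω * ω = 2 * Real.pi := div_mul_cancel₀ _ hω.ne'
  simpa only [hk] using stmt1_general (div_ne_zero Real.two_pi_pos.ne' hω.ne') hctrl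
    (hk.symm ▸ controllable_J2mat_e4 Real.two_pi_pos.ne')
end
end
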